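/- Let D¹ be a nonempty finite subset of ℝ^d with ‖x‖₂ ≤ x_max for every x ∈ D¹, fix an integer n₁ ≥ 1, and let X₁,…,X_{n₁} be i.i.d. uniform draws (with replacement) from D¹. Fix k ∈ [K]. Then there exists a constant C = C(ξ, ζ, ν, x_max) > 0 such that for every δ ∈ (0,1), with probability at least 1 − δ, sup over Θ ∈ Φ_{ξ,ζ,ν} of |(1/n₁) Σ_{i=1}^{n₁} ψ_k(X_i;Θ) − (1/|D¹|) Σ_{x∈D¹} ψ_k(x;Θ)| ≤ 2C√(d/n₁) + 4√(2 log(4/δ)/n₁). -/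

import Mathlib

open MeasureTheory

/-- Density of a `d`-dimensional Gaussian with mean `μ` and covariance `S`. -/
noncomputable def gaussDensity {d : ℕ} (x μ : EuclideanSpace ℝ (Fin d))
    (S : Matrix (Fin d) (Fin d) ℝ) : ℝ :=
  (2 * Real.pi) ^ (-(d : ℝ) / 2) * S.det ^ (-(1 : ℝ) / 2) *
    Real.exp (-(∑ i, ∑ j, (x - μ) i * S⁻¹ i j * (x - μ) j) / 2)

/-- Responsibility (soft assignment) of component `k`. -/
noncomputable def resp {d K : ℕ} (π : Fin K → ℝ)
    (μ : Fin K → EuclideanSpace ℝ (Fin d)) (S : Fin K → Matrix (Fin d) (Fin d) ℝ)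
    (k : Fin K) (x : EuclideanSpace ℝ (Fin d)) : ℝ :=
  π k * gaussDensity x (μ k) (S k) / ∑ l, π l * gaussDensity x (μ l) (S l)

/-- The constrained parameter set `Φ_{ξ,ζ,ν}`. -/
def inPhi {d K : ℕ} (ξ ζ ν : ℝ) (π : Fin K → ℝ)
    (μ : Fin K → EuclideanSpace ℝ (Fin d)) (S : Fin K → Matrix (Fin d) (Fin d) ℝ) : Prop :=
  (∀ k, 0 < π k) ∧ (∑ k, π k = 1) ∧
  (∀ k, ξ < π k ∧ π k < 1 - ξ) ∧ (∀ k, ‖μ k‖ ≤ ν) ∧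
  (∀ k, (S k).IsSymm ∧ ∀ v : EuclideanSpace ℝ (Fin d), v ≠ 0 →
    ζ * ‖v‖ ^ 2 < ∑ i, ∑ j, v i * S k i j * v j ∧
      (∑ i, ∑ j, v i * S k i j * v j) < (1 / ζ) * ‖v‖ ^ 2)

open ProbabilityTheory

open scoped NNReal

/-!
Responsibilities are Gibbs weights whose scores, the exponents of the component densities, are
quadratic polynomials in `x`. Keeping the factors `π_l det(Σ_l)^{-1/2}` out of the scores and
normalising them to sum to one leaves scores that, for `‖x‖ ≤ xmax`, are nonpositive and uniformly
bounded below on `Φ_{ξ,ζ,ν}`. The denominator then stays away from zero, and `Θ ↦ ψ_k(x; Θ)` is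
Lipschitz, uniformly in `Θ` and `x`, in finitely many linear functionals `⟪a(Θ), Ψ_j(x)⟫` with
`‖a(Θ)‖ = O(√d)` and `‖Ψ_j(x)‖ ≤ xmax² + 1`.

For a finite family with this property, symmetrisation and contraction, carried out for one draw at
a time, replace each centred term in the expected supremum by a random sign times a random
feature; Cauchy–Schwarz and the second moment of the resulting random sum give `O(√(d n))`.
McDiarmid's inequality controls the deviation of the supremum from its mean. None of these bounds
depends on the size of the family, so separability of the space of coefficient vectors extends
them to all of `Φ_{ξ,ζ,ν}`.
-/

section ProductMeasures

variable {n : ℕ} {α : Fin (n + 1) → Type*} [∀ i, MeasurableSpace (α i)]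

theorem piFinSuccAbove_zero_symm_apply (p : α 0 × (∀ i : Fin n, α i.succ)) :
    (MeasurableEquiv.piFinSuccAbove α 0).symm p = Fin.cons p.1 p.2 :=
  Fin.insertNth_zero _ _

theorem measurableEmbedding_finCons :
    MeasurableEmbedding
      (fun p : α 0 × (∀ i : Fin n, α i.succ) ↦ (Fin.cons p.1 p.2 : ∀ i, α i)) := by
  rw [← funext piFinSuccAbove_zero_symm_apply]
  exact (MeasurableEquiv.piFinSuccAbove α 0).symm.measurableEmbedding

theorem measurePreserving_finCons (μ : ∀ i, Measure (α i)) [∀ i, SigmaFinite (μ i)] :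
    MeasurePreserving (fun p : α 0 × (∀ i : Fin n, α i.succ) ↦ (Fin.cons p.1 p.2 : ∀ i, α i))
      ((μ 0).prod (Measure.pi fun i : Fin n ↦ μ i.succ)) (Measure.pi μ) := by
  rw [← funext piFinSuccAbove_zero_symm_apply]
  exact (measurePreserving_piFinSuccAbove μ 0).symm

theorem integral_pi_finCons (μ : ∀ i, Measure (α i)) [∀ i, SigmaFinite (μ i)]
    (F : (∀ i, α i) → ℝ) :
    ∫ ω, F ω ∂Measure.pi μ =
      ∫ p, F (Fin.cons p.1 p.2) ∂(μ 0).prod (Measure.pi fun i : Fin n ↦ μ i.succ) :=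
  ((measurePreserving_finCons μ).integral_comp measurableEmbedding_finCons F).symm

theorem integrable_pi_finCons_iff {μ : ∀ i, Measure (α i)} [∀ i, SigmaFinite (μ i)]
    {F : (∀ i, α i) → ℝ} :
    Integrable F (Measure.pi μ) ↔
      Integrable (fun p : α 0 × (∀ i : Fin n, α i.succ) ↦ F (Fin.cons p.1 p.2))
        ((μ 0).prod (Measure.pi fun i : Fin n ↦ μ i.succ)) :=
  ((measurePreserving_finCons μ).integrable_comp_emb measurableEmbedding_finCons).symm

end ProductMeasures

section McDiarmid

/-- The hypothesis of McDiarmid's inequality: changing the `i`-th coordinate alone changes the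
value of `f` by at most `c i`. -/
def HasBoundedDifferences {ι : Type*} [DecidableEq ι] {α : ι → Type*} (f : (∀ i, α i) → ℝ)
    (c : ι → ℝ≥0) : Prop :=
  ∀ (ω : ∀ i, α i) (i : ι) (x : α i), |f (Function.update ω i x) - f ω| ≤ c i

theorem hasSubgaussianMGF_sub_integral_of_abs_sub_le {Ω : Type*} [MeasurableSpace Ω]
    {μ : Measure Ω} [IsProbabilityMeasure μ] {h : Ω → ℝ} {c : ℝ≥0} (hm : Measurable h)
    (hc : ∀ x y, |h x - h y| ≤ c) :
    HasSubgaussianMGF (fun x ↦ h x - ∫ y, h y ∂μ) ((c / 2) ^ 2) μ := by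
  obtain ⟨x₀⟩ := nonempty_of_isProbabilityMeasure μ
  have hbdd : BddBelow (Set.range h) :=
    ⟨h x₀ - c, by rintro _ ⟨x, rfl⟩; linarith [(abs_le.1 (hc x₀ x)).2]⟩
  have : Nonempty Ω := ⟨x₀⟩
  have hIcc : ∀ x, h x ∈ Set.Icc (⨅ y, h y) ((⨅ y, h y) + c) := fun x ↦
    ⟨ciInf_le hbdd x, by
      rw [← sub_le_iff_le_add]
      exact le_ciInf fun y ↦ by linarith [(abs_le.1 (hc x y)).2]⟩
  simpa using hasSubgaussianMGF_of_mem_Icc hm.aemeasurable (.of_forall hIcc)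

theorem hasSubgaussianMGF_prod {Ω Ω' : Type*} [MeasurableSpace Ω] [MeasurableSpace Ω']
    {μ : Measure Ω} {ν : Measure Ω'} [SFinite μ] [SFinite ν] {F : Ω × Ω' → ℝ} {g : Ω → ℝ}
    {a b : ℝ≥0} (hg : HasSubgaussianMGF g a μ)
    (hF : ∀ x, HasSubgaussianMGF (fun y ↦ F (x, y) - g x) b ν)
    (hint : ∀ t, Integrable (fun p ↦ Real.exp (t * F p)) (μ.prod ν)) :
    HasSubgaussianMGF F (a + b) (μ.prod ν) := by
  refine ⟨hint, fun t ↦ ?_⟩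
  have hsection : ∀ x, ∫ y, Real.exp (t * F (x, y)) ∂ν ≤
      Real.exp (b * t ^ 2 / 2) * Real.exp (t * g x) := fun x ↦ by
    have hsplit : ∀ y, Real.exp (t * F (x, y)) =
        Real.exp (t * (F (x, y) - g x)) * Real.exp (t * g x) :=
      fun y ↦ by rw [← Real.exp_add]; ring_nf
    simp_rw [hsplit, integral_mul_const]
    exact mul_le_mul_of_nonneg_right ((hF x).mgf_le t) (Real.exp_pos _).le
  calc mgf F (μ.prod ν) t = ∫ x, ∫ y, Real.exp (t * F (x, y)) ∂ν ∂μ := integral_prod _ (hint t)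
    _ ≤ ∫ x, Real.exp (b * t ^ 2 / 2) * Real.exp (t * g x) ∂μ :=
      integral_mono (hint t).integral_prod_left ((hg.integrable_exp_mul t).const_mul _) hsection
    _ ≤ Real.exp (b * t ^ 2 / 2) * Real.exp (a * t ^ 2 / 2) := by
      rw [integral_const_mul]
      exact mul_le_mul_of_nonneg_left (hg.mgf_le t) (Real.exp_pos _).le
    _ = Real.exp ((a + b : ℝ≥0) * t ^ 2 / 2) := by
      rw [← Real.exp_add, NNReal.coe_add]
      ring_nf

namespace HasBoundedDifferences

theorem tail {n : ℕ} {α : Fin (n + 1) → Type*} {f : (∀ i, α i) → ℝ} {c : Fin (n + 1) → ℝ≥0}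
    (hf : HasBoundedDifferences f c) (a : α 0) :
    HasBoundedDifferences (fun ω : ∀ i : Fin n, α i.succ ↦ f (Fin.cons a ω))
      (fun i ↦ c i.succ) := fun ω i x ↦ by
  simpa only [Fin.cons_update] using hf (Fin.cons a ω) i.succ x

theorem abs_cons_sub_cons_le {n : ℕ} {α : Fin (n + 1) → Type*} {f : (∀ i, α i) → ℝ}
    {c : Fin (n + 1) → ℝ≥0} (hf : HasBoundedDifferences f c) (a b : α 0)
    (ω : ∀ i : Fin n, α i.succ) : |f (Fin.cons a ω) - f (Fin.cons b ω)| ≤ c 0 := by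
  simpa only [Fin.update_cons_zero] using hf (Fin.cons b ω) 0 a

theorem abs_sub_le_sum {n : ℕ} {α : Fin n → Type*} {f : (∀ i, α i) → ℝ} {c : Fin n → ℝ≥0}
    (hf : HasBoundedDifferences f c) (ω ω' : ∀ i, α i) : |f ω - f ω'| ≤ ∑ i, (c i : ℝ) := by
  induction n with
  | zero => simp [Subsingleton.elim ω ω']
  | succ n ih =>
    have htail := ih (hf.tail (ω 0)) (Fin.tail ω) (Fin.tail ω')
    have hhead := hf.abs_cons_sub_cons_le (ω 0) (ω' 0) (Fin.tail ω')
    rw [Fin.cons_self_tail] at htail hhead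
    rw [Fin.sum_univ_succ]
    linarith [abs_sub_le (f ω) (f (Fin.cons (ω 0) (Fin.tail ω'))) (f ω')]

theorem exists_forall_abs_le {n : ℕ} {α : Fin n → Type*} {f : (∀ i, α i) → ℝ}
    {c : Fin n → ℝ≥0} (hf : HasBoundedDifferences f c) : ∃ M, ∀ ω, |f ω| ≤ M := by
  rcases isEmpty_or_nonempty (∀ i, α i) with _ | ⟨⟨ω₀⟩⟩
  · exact ⟨0, isEmptyElim⟩
  · refine ⟨|f ω₀| + ∑ i, (c i : ℝ), fun ω ↦ ?_⟩
    linarith [abs_sub_abs_le_abs_sub (f ω) (f ω₀), hf.abs_sub_le_sum ω ω₀]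

variable {n : ℕ} {α : Fin n → Type*} [∀ i, MeasurableSpace (α i)] {μ : ∀ i, Measure (α i)}
  [∀ i, IsProbabilityMeasure (μ i)] {f : (∀ i, α i) → ℝ} {c : Fin n → ℝ≥0}

theorem integrable (hf : HasBoundedDifferences f c) (hm : Measurable f) :
    Integrable f (Measure.pi μ) := by
  obtain ⟨M, hM⟩ := hf.exists_forall_abs_le
  exact .of_bound hm.aestronglyMeasurable M (.of_forall hM)

theorem integrable_exp_mul_sub (hf : HasBoundedDifferences f c) (hm : Measurable f) (t a : ℝ) :
    Integrable (fun ω ↦ Real.exp (t * (f ω - a))) (Measure.pi μ) := by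
  obtain ⟨M, hM⟩ := hf.exists_forall_abs_le
  refine .of_bound (by fun_prop) (Real.exp (|t| * (M + |a|))) (.of_forall fun ω ↦ ?_)
  rw [Real.norm_eq_abs, Real.abs_exp, Real.exp_le_exp]
  calc t * (f ω - a) ≤ |t * (f ω - a)| := le_abs_self _
    _ = |t| * |f ω - a| := abs_mul _ _
    _ ≤ |t| * (M + |a|) := by
      gcongr
      linarith [abs_sub (f ω) a, hM ω]

theorem hasSubgaussianMGF (hf : HasBoundedDifferences f c) (hm : Measurable f) :
    HasSubgaussianMGF (fun ω ↦ f ω - ∫ ω', f ω' ∂Measure.pi μ) (∑ i, (c i / 2) ^ 2)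
      (Measure.pi μ) := by
  induction n with
  | zero =>
    have hconst : ∀ ω, f ω - ∫ ω', f ω' ∂Measure.pi μ = 0 := fun ω ↦ by
      simp [Subsingleton.elim ω default, integral_unique]
    simp [hconst]
  | succ n ih =>
    set g : α 0 → ℝ := fun a ↦ ∫ ω, f (Fin.cons a ω) ∂Measure.pi fun i : Fin n ↦ μ i.succ
    have hmc : Measurable fun p : α 0 × (∀ i : Fin n, α i.succ) ↦ f (Fin.cons p.1 p.2) :=
      hm.comp measurableEmbedding_finCons.measurable
    have hmf : ∀ a, Measurable fun ω ↦ f (Fin.cons a ω) := fun a ↦ hmc.comp measurable_prodMk_left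
    have hgm : Measurable g := hmc.stronglyMeasurable.integral_prod_right.measurable
    have hfg : ∫ ω, f ω ∂Measure.pi μ = ∫ a, g a ∂μ 0 := by
      rw [integral_pi_finCons, integral_prod _ (integrable_pi_finCons_iff.1 (hf.integrable hm))]
    have hgc : ∀ a b, |g a - g b| ≤ c 0 := fun a b ↦ by
      rw [← integral_sub ((hf.tail a).integrable (hmf a)) ((hf.tail b).integrable (hmf b))]
      simpa using norm_integral_le_of_norm_le_const
        (.of_forall fun ω ↦ (Real.norm_eq_abs _).trans_le (hf.abs_cons_sub_cons_le a b ω))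
        (μ := Measure.pi fun i : Fin n ↦ μ i.succ)
    have hprod := hasSubgaussianMGF_prod (ν := Measure.pi fun i : Fin n ↦ μ i.succ)
      (F := fun p ↦ f (Fin.cons p.1 p.2) - ∫ a, g a ∂μ 0)
      (hasSubgaussianMGF_sub_integral_of_abs_sub_le hgm hgc)
      (fun a ↦ by simpa using ih (hf.tail a) (hmf a))
      (fun t ↦ integrable_pi_finCons_iff.1 (hf.integrable_exp_mul_sub hm t _))
    rw [hfg, Fin.sum_univ_succ]
    refine ⟨fun t ↦ hf.integrable_exp_mul_sub hm t _, fun t ↦ ?_⟩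
    rw [mgf, integral_pi_finCons]
    exact hprod.mgf_le t

theorem measureReal_le_sub_integral_le (hf : HasBoundedDifferences f c) (hm : Measurable f)
    {s : ℝ} (hs : 0 ≤ s) :
    (Measure.pi μ).real {ω | s ≤ f ω - ∫ ω', f ω' ∂Measure.pi μ} ≤
      Real.exp (-(2 * s ^ 2) / ∑ i, (c i : ℝ) ^ 2) := by
  refine ((hf.hasSubgaussianMGF hm).measure_ge_le hs).trans_eq ?_
  congr 1
  push_cast
  simp_rw [div_pow, ← Finset.sum_div]
  rcases eq_or_ne (∑ i, (c i : ℝ) ^ 2) 0 with h | h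
  · simp [h]
  · field_simp

end HasBoundedDifferences

end McDiarmid

section Comparison

variable {X Y T : Type*} [MeasurableSpace X] [MeasurableSpace Y] [Finite T] [Nonempty T]
  {μ : Measure X} {ν : Measure Y}

theorem integrable_iSup {f : T → X → ℝ} (hf : ∀ t, Integrable (f t) μ) :
    Integrable (fun x ↦ ⨆ t, f t x) μ := by
  cases nonempty_fintype T
  have hsup : (fun x ↦ ⨆ t, f t x) = Finset.univ.sup' Finset.univ_nonempty f := by
    ext x
    rw [Finset.sup'_apply, Finset.sup'_univ_eq_ciSup]
  rw [hsup]
  exact Finset.sup'_induction (p := (Integrable · μ)) _ f (fun _ h _ h' ↦ h.sup h')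
    fun t _ ↦ hf t

theorem integrable_pi_sum {n : ℕ} [IsProbabilityMeasure μ] {E : Type*} [NormedAddCommGroup E]
    {g : X → E} (hg : Integrable g μ) :
    Integrable (fun ω : Fin n → X ↦ ∑ i, g (ω i)) (Measure.pi fun _ ↦ μ) :=
  integrable_finsetSum _ fun i _ ↦
    (measurePreserving_eval (fun _ ↦ μ) i).integrable_comp_of_integrable hg

theorem integrable_iSup_add_add_sum [IsFiniteMeasure μ] [IsProbabilityMeasure ν]
    {p : T → X → ℝ} {q : T → Y → ℝ} (hp : ∀ t, Integrable (p t) μ) (hq : ∀ t, Integrable (q t) ν)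
    (n : ℕ) (A : T → ℝ) :
    Integrable (fun z : X × (Fin n → Y) ↦ ⨆ t, (A t + p t z.1 + ∑ i, q t (z.2 i)))
      (μ.prod (Measure.pi fun _ ↦ ν)) :=
  integrable_iSup fun t ↦
    ((integrable_const _).add ((hp t).comp_fst _)).add ((integrable_pi_sum (hq t)).comp_snd _)

theorem integral_iSup_add_sum_le [IsProbabilityMeasure μ] [IsProbabilityMeasure ν]
    {p : T → X → ℝ} {q : T → Y → ℝ} (hp : ∀ t, Integrable (p t) μ) (hq : ∀ t, Integrable (q t) ν)
    (hstep : ∀ A : T → ℝ, ∫ x, ⨆ t, (A t + p t x) ∂μ ≤ ∫ y, ⨆ t, (A t + q t y) ∂ν)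
    (n : ℕ) (A : T → ℝ) :
    ∫ ω : Fin n → X, ⨆ t, (A t + ∑ i, p t (ω i)) ∂Measure.pi (fun _ ↦ μ) ≤
      ∫ η : Fin n → Y, ⨆ t, (A t + ∑ i, q t (η i)) ∂Measure.pi (fun _ ↦ ν) := by
  induction n generalizing A with
  | zero => simp
  | succ n ih =>
    have hpp := integrable_iSup_add_add_sum hp hp n A
    have hpq := integrable_iSup_add_add_sum hp hq n A
    have hqq := integrable_iSup_add_add_sum hq hq n A
    simp_rw [integral_pi_finCons, Fin.sum_univ_succ, Fin.cons_zero, Fin.cons_succ, ← add_assoc]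
    calc _ = ∫ x, ∫ ω : Fin n → X, ⨆ t, (A t + p t x + ∑ i, p t (ω i))
              ∂(Measure.pi fun _ ↦ μ) ∂μ := integral_prod _ hpp
      _ ≤ ∫ x, ∫ η : Fin n → Y, ⨆ t, (A t + p t x + ∑ i, q t (η i))
              ∂(Measure.pi fun _ ↦ ν) ∂μ :=
        integral_mono hpp.integral_prod_left hpq.integral_prod_left fun x ↦ ih _
      _ = ∫ η : Fin n → Y, ∫ x, ⨆ t, (A t + ∑ i, q t (η i) + p t x) ∂μ
              ∂(Measure.pi fun _ ↦ ν) := by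
        rw [← integral_prod _ hpq, integral_prod_symm _ hpq]
        simp_rw [add_right_comm]
      _ ≤ ∫ η : Fin n → Y, ∫ y, ⨆ t, (A t + ∑ i, q t (η i) + q t y) ∂ν
              ∂(Measure.pi fun _ ↦ ν) := by
        refine integral_mono ?_ ?_ fun η ↦ hstep _
        · simpa only [add_right_comm] using hpq.integral_prod_right
        · simpa only [add_right_comm] using hqq.integral_prod_right
      _ = _ := by
        simp_rw [integral_prod_symm _ hqq, add_right_comm]

end Comparison

section SecondMoment

variable {X H : Type*} [MeasurableSpace X] {μ : Measure X} [IsProbabilityMeasure μ]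
  [NormedAddCommGroup H]

theorem memLp_pi_sum {n : ℕ} {p : ENNReal} {Z : X → H} (hZ : MemLp Z p μ) :
    MemLp (fun ω : Fin n → X ↦ ∑ i, Z (ω i)) p (Measure.pi fun _ ↦ μ) :=
  memLp_finsetSum _ fun i _ ↦ hZ.comp_measurePreserving (measurePreserving_eval (fun _ ↦ μ) i)

variable [InnerProductSpace ℝ H] [CompleteSpace H]

theorem integral_norm_add_sq {Z : X → H} (hZ : MemLp Z 2 μ) (hmean : ∫ x, Z x ∂μ = 0) (v : H) :
    ∫ x, ‖v + Z x‖ ^ 2 ∂μ = ‖v‖ ^ 2 + ∫ x, ‖Z x‖ ^ 2 ∂μ := by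
  have hint : Integrable Z μ := hZ.integrable one_le_two
  have hsq : Integrable (fun x ↦ ‖Z x‖ ^ 2) μ := hZ.integrable_norm_pow two_ne_zero
  have hinner : Integrable (fun x ↦ 2 * inner ℝ v (Z x)) μ := (hint.const_inner v).const_mul 2
  simp_rw [norm_add_sq_real]
  rw [integral_add ((integrable_const (‖v‖ ^ 2)).fun_add hinner) hsq,
    integral_add (integrable_const _) hinner,
    integral_const_mul, integral_inner hint, hmean]
  simp

theorem integral_norm_add_sum_sq {Z : X → H} (hZ : MemLp Z 2 μ) (hmean : ∫ x, Z x ∂μ = 0) (n : ℕ)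
    (v : H) :
    ∫ ω : Fin n → X, ‖v + ∑ i, Z (ω i)‖ ^ 2 ∂Measure.pi (fun _ ↦ μ) =
      ‖v‖ ^ 2 + n * ∫ x, ‖Z x‖ ^ 2 ∂μ := by
  induction n generalizing v with
  | zero => simp
  | succ n ih =>
    have hint : Integrable (fun p : X × (Fin n → X) ↦ ‖v + Z p.1 + ∑ i, Z (p.2 i)‖ ^ 2)
        (μ.prod (Measure.pi fun _ ↦ μ)) :=
      (((memLp_const v).add (hZ.comp_fst _)).add
        ((memLp_pi_sum hZ).comp_snd _)).integrable_norm_pow two_ne_zero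
    have hhead : Integrable (fun x ↦ ‖v + Z x‖ ^ 2) μ :=
      ((memLp_const v).add hZ).integrable_norm_pow two_ne_zero
    simp_rw [integral_pi_finCons, Fin.sum_univ_succ, Fin.cons_zero, Fin.cons_succ, ← add_assoc]
    rw [integral_prod _ hint]
    simp_rw [ih]
    rw [integral_add hhead (integrable_const _), integral_norm_add_sq hZ hmean]
    simp
    ring

theorem integral_norm_sum_le {Z : X → H} (hZ : MemLp Z 2 μ) (hmean : ∫ x, Z x ∂μ = 0) (n : ℕ) :
    ∫ ω : Fin n → X, ‖∑ i, Z (ω i)‖ ∂Measure.pi (fun _ ↦ μ) ≤ √(n * ∫ x, ‖Z x‖ ^ 2 ∂μ) := by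
  refine Real.le_sqrt_of_sq_le ?_
  have hsum := (memLp_pi_sum (n := n) hZ).norm
  have hsq := integral_norm_add_sum_sq hZ hmean n 0
  simp only [zero_add, norm_zero, ne_eq, OfNat.ofNat_ne_zero, not_false_eq_true, zero_pow] at hsq
  have hvar := variance_nonneg (fun ω : Fin n → X ↦ ‖∑ i, Z (ω i)‖) (Measure.pi fun _ ↦ μ)
  rw [variance_eq_sub hsum] at hvar
  simp only [Pi.pow_apply, hsq] at hvar
  linarith

end SecondMoment

section Contraction

variable {T : Type*} [Finite T] [Nonempty T]

-- Scaling by `card J` turns the sum over `j` into an average, so that the expectation over a single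
-- random index and a single random sign dominates all the functions `g j` at once.
theorem iSup_add_add_iSup_sub_le {J : Type*} [Fintype J] [Nonempty J] {f : T → ℝ}
    {g : J → T → ℝ} (hfg : ∀ t t', |f t - f t'| ≤ ∑ j, |g j t - g j t'|) (A : T → ℝ) :
    (⨆ t, (A t + f t)) + ⨆ t, (A t - f t) ≤
      (Fintype.card J : ℝ)⁻¹ * ∑ j, ((⨆ t, (A t + Fintype.card J * g j t)) +
        ⨆ t, (A t - Fintype.card J * g j t)) := by
  set m : ℝ := (Fintype.card J : ℝ) with hm_def
  have hm : 0 < m := by simp [hm_def, Fintype.card_pos]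
  obtain ⟨t, ht⟩ := exists_eq_ciSup_of_finite (f := fun t ↦ A t + f t)
  obtain ⟨t', ht'⟩ := exists_eq_ciSup_of_finite (f := fun t ↦ A t - f t)
  have hterm : ∀ j, A t + A t' + m * |g j t - g j t'| ≤
      (⨆ t, (A t + m * g j t)) + ⨆ t, (A t - m * g j t) := fun j ↦ by
    have hadd := Finite.le_ciSup fun t ↦ A t + m * g j t
    have hsub := Finite.le_ciSup fun t ↦ A t - m * g j t
    rcases abs_cases (g j t - g j t') with ⟨h, _⟩ | ⟨h, _⟩ <;> rw [h]
    · linarith [hadd t, hsub t']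
    · linarith [hadd t', hsub t]
  rw [← ht, ← ht', inv_mul_eq_div, le_div_iff₀ hm]
  calc (A t + f t + (A t' - f t')) * m = (A t + A t' + (f t - f t')) * m := by ring
    _ ≤ (A t + A t' + ∑ j, |g j t - g j t'|) * m := by
      gcongr
      exact (le_abs_self _).trans (hfg t t')
    _ = ∑ j, (A t + A t' + m * |g j t - g j t'|) := by
      rw [Finset.sum_add_distrib, Finset.sum_const, ← Finset.mul_sum, Finset.card_univ,
        nsmul_eq_mul]
      ring
    _ ≤ _ := Finset.sum_le_sum fun j _ ↦ hterm j

variable {X : Type*} [MeasurableSpace X] {μ : Measure X} [IsProbabilityMeasure μ]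

theorem integral_iSup_add_sub_integral_le {f : T → X → ℝ} (hf : ∀ t, Integrable (f t) μ)
    (A : T → ℝ) :
    ∫ x, ⨆ t, (A t + (f t x - ∫ y, f t y ∂μ)) ∂μ ≤
      ∫ x, ((⨆ t, (A t + 2 * f t x)) + ⨆ t, (A t - 2 * f t x)) / 2 ∂μ := by
  have hadd : Integrable (fun x ↦ ⨆ t, (A t + 2 * f t x)) μ :=
    integrable_iSup fun t ↦ (integrable_const _).add ((hf t).const_mul 2)
  have hsub : Integrable (fun x ↦ ⨆ t, (A t - 2 * f t x)) μ :=
    integrable_iSup fun t ↦ (integrable_const _).sub ((hf t).const_mul 2)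
  have hmean : ∀ t, A t - 2 * ∫ y, f t y ∂μ ≤ ∫ x, ⨆ t, (A t - 2 * f t x) ∂μ := fun t ↦ by
    calc A t - 2 * ∫ y, f t y ∂μ = ∫ x, (A t - 2 * f t x) ∂μ := by
          rw [integral_sub (integrable_const _) ((hf t).const_mul 2), integral_const_mul]
          simp
      _ ≤ _ := integral_mono ((integrable_const _).sub ((hf t).const_mul 2)) hsub
          fun x ↦ Finite.le_ciSup (fun t ↦ A t - 2 * f t x) t
  calc _ ≤ ∫ x, ((⨆ t, (A t + 2 * f t x)) + ∫ y, ⨆ t, (A t - 2 * f t y) ∂μ) / 2 ∂μ := by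
        refine integral_mono (integrable_iSup fun t ↦ (integrable_const _).add
          ((hf t).sub (integrable_const _))) ((hadd.add (integrable_const _)).div_const 2)
          fun x ↦ ciSup_le fun t ↦ ?_
        linarith [hmean t, Finite.le_ciSup (fun t ↦ A t + 2 * f t x) t]
    _ = _ := by
        rw [integral_div, integral_div, integral_add hadd (integrable_const _),
          integral_add hadd hsub]
        simp

end Contraction

section SignedFeature

variable {X : Type*} [MeasurableSpace X] {μ : Measure X} {J : Type*} [MeasurableSpace J]
  {H : Type*} [NormedAddCommGroup H] [InnerProductSpace ℝ H]

/-- The feature `Ψ j x` with a sign, as a function of the sample point `x` and of a signed index.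
With the sign and the index uniformly distributed, it plays the role of Rademacher variables. -/
def signedFeature (Ψ : J → X → H) (p : X × J × Bool) : H :=
  (bif p.2.2 then 1 else -1 : ℝ) • Ψ p.2.1 p.1

theorem measurable_signedFeature [Countable J] [MeasurableSingletonClass J] [MeasurableSpace H]
    [BorelSpace H] {Ψ : J → X → H} (hΨ : ∀ j, Measurable (Ψ j)) : Measurable (signedFeature Ψ) :=
  measurable_from_prod_countable_left fun p ↦ (hΨ p.1).const_smul (bif p.2 then 1 else -1 : ℝ)

variable [Fintype J] [Nonempty J]

variable (μ J) in
/-- The joint law of a sample point of law `μ` and of an independent uniform element of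
`J × Bool`. -/
noncomputable def signedLaw : Measure (X × J × Bool) :=
  μ.prod (PMF.uniformOfFintype (J × Bool)).toMeasure

instance [IsProbabilityMeasure μ] : IsProbabilityMeasure (signedLaw μ J) :=
  inferInstanceAs (IsProbabilityMeasure (μ.prod _))

theorem norm_signedFeature_le {Ψ : J → X → H} {r : ℝ} (hr : ∀ᵐ x ∂μ, ∀ j, ‖Ψ j x‖ ≤ r) :
    ∀ᵐ p ∂signedLaw μ J, ‖signedFeature Ψ p‖ ≤ r := by
  filter_upwards [Measure.quasiMeasurePreserving_fst.ae hr] with p hp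
  have hsign : ‖(bif p.2.2 then 1 else -1 : ℝ)‖ = 1 := by cases p.2.2 <;> simp
  rw [signedFeature, norm_smul, hsign, one_mul]
  exact hp p.2.1

variable [MeasurableSingletonClass J]

theorem integral_uniform_prod_bool (F : J × Bool → ℝ) :
    ∫ u, F u ∂(PMF.uniformOfFintype (J × Bool)).toMeasure =
      (Fintype.card J : ℝ)⁻¹ * ∑ j, (F (j, true) + F (j, false)) / 2 := by
  simp only [PMF.integral_eq_sum, PMF.uniformOfFintype_apply, Fintype.sum_prod_type,
    Fintype.sum_bool, Finset.mul_sum, smul_eq_mul]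
  refine Finset.sum_congr rfl fun j _ ↦ ?_
  simp only [Fintype.card_prod, Fintype.card_bool, Nat.cast_mul, Nat.cast_ofNat,
    ENNReal.toReal_inv, ENNReal.toReal_mul, ENNReal.toReal_natCast, ENNReal.toReal_ofNat, mul_inv]
  ring

variable [IsProbabilityMeasure μ] [MeasurableSpace H] [BorelSpace H] [SecondCountableTopology H]
  {Ψ : J → X → H} {r : ℝ}

theorem memLp_signedFeature (hΨ : ∀ j, Measurable (Ψ j)) (hr : ∀ᵐ x ∂μ, ∀ j, ‖Ψ j x‖ ≤ r)
    (p : ENNReal) : MemLp (signedFeature Ψ) p (signedLaw μ J) :=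
  .of_bound (measurable_signedFeature hΨ).aestronglyMeasurable r (norm_signedFeature_le hr)

theorem integrable_inner_signedFeature (hΨ : ∀ j, Measurable (Ψ j))
    (hr : ∀ᵐ x ∂μ, ∀ j, ‖Ψ j x‖ ≤ r) (v : H) :
    Integrable (fun p ↦ inner ℝ v (signedFeature Ψ p)) (signedLaw μ J) :=
  ((memLp_signedFeature hΨ hr 1).integrable le_rfl).const_inner v

variable [CompleteSpace H]

theorem integral_signedFeature (hΨ : ∀ j, Measurable (Ψ j)) (hr : ∀ᵐ x ∂μ, ∀ j, ‖Ψ j x‖ ≤ r) :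
    ∫ p, signedFeature Ψ p ∂signedLaw μ J = 0 := by
  refine ext_inner_left ℝ fun v ↦ ?_
  have hint := integrable_inner_signedFeature hΨ hr v
  rw [← integral_inner ((memLp_signedFeature hΨ hr 1).integrable le_rfl), signedLaw,
    integral_prod _ hint]
  simp [signedFeature, integral_uniform_prod_bool]

theorem integral_norm_sum_signedFeature_le (hΨ : ∀ j, Measurable (Ψ j))
    (hr : ∀ᵐ x ∂μ, ∀ j, ‖Ψ j x‖ ≤ r) (n : ℕ) :
    ∫ η : Fin n → X × J × Bool, ‖∑ i, signedFeature Ψ (η i)‖ ∂Measure.pi (fun _ ↦ signedLaw μ J) ≤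
      r * √n := by
  have hbound := norm_signedFeature_le hr
  have hZ := memLp_signedFeature hΨ hr 2
  have hr0 : 0 ≤ r := by
    obtain ⟨p, hp⟩ := hbound.exists
    exact (norm_nonneg _).trans hp
  have hsecond : ∫ p, ‖signedFeature Ψ p‖ ^ 2 ∂signedLaw μ J ≤ r ^ 2 := by
    simpa using integral_mono_ae (hZ.integrable_norm_pow two_ne_zero) (integrable_const (r ^ 2))
      (hbound.mono fun p hp ↦ pow_le_pow_left₀ (norm_nonneg _) hp 2)
  calc _ ≤ √(n * ∫ p, ‖signedFeature Ψ p‖ ^ 2 ∂signedLaw μ J) :=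
        integral_norm_sum_le hZ (integral_signedFeature hΨ hr) n
    _ ≤ √(r ^ 2 * n) := by
        rw [mul_comm]
        gcongr
    _ = r * √n := by rw [Real.sqrt_mul (sq_nonneg r), Real.sqrt_sq hr0]

end SignedFeature

section UniformDeviation

theorem abs_iSup_sub_iSup_le {T : Type*} [Finite T] [Nonempty T] {u v : T → ℝ} {c : ℝ}
    (h : ∀ t, |u t - v t| ≤ c) : |(⨆ t, u t) - ⨆ t, v t| ≤ c := by
  refine abs_sub_le_iff.2 ⟨?_, ?_⟩ <;> rw [sub_le_iff_le_add] <;> refine ciSup_le fun t ↦ ?_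
  · linarith [(abs_sub_le_iff.1 (h t)).1, Finite.le_ciSup v t]
  · linarith [(abs_sub_le_iff.1 (h t)).2, Finite.le_ciSup u t]

theorem measure_exists_lt_le_of_forall_finset {Ω T : Type*} [MeasurableSpace Ω] {P : Measure Ω}
    [TopologicalSpace T] [TopologicalSpace.SeparableSpace T] {D : T → Ω → ℝ} {c : ℝ} {ε : ENNReal}
    (hD : ∀ᵐ ω ∂P, Continuous fun t ↦ D t ω)
    (hfin : ∀ F : Finset T, P {ω | ∃ t ∈ F, c < D t ω} ≤ ε) : P {ω | ∃ t, c < D t ω} ≤ ε := by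
  classical
  obtain ⟨s, hs, hdense⟩ := TopologicalSpace.exists_countable_dense T
  have : Countable s := hs
  let E : Finset s → Set Ω := fun F ↦ {ω | ∃ t ∈ F, c < D t ω}
  have hdir : Directed (· ⊆ ·) E := directed_of_isDirected_le fun F G hFG ω ⟨t, ht, h⟩ ↦
    ⟨t, (show F ⊆ G from hFG) ht, h⟩
  have hsub : {ω | ∃ t, c < D t ω} ≤ᵐ[P] ⋃ F, E F := by
    filter_upwards [hD] with ω hω ⟨t, ht⟩
    obtain ⟨t', ht's, ht'⟩ := hdense.exists_mem_open (isOpen_lt continuous_const hω) ⟨t, ht⟩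
    exact Set.mem_iUnion.2 ⟨{⟨t', ht's⟩}, ⟨t', ht's⟩, Finset.mem_singleton_self _, ht'⟩
  refine (measure_mono_ae hsub).trans ?_
  rw [hdir.measure_iUnion]
  refine iSup_le fun F ↦ (measure_mono ?_).trans (hfin (F.image Subtype.val))
  rintro ω ⟨t, ht, h⟩
  exact ⟨t, Finset.mem_image_of_mem _ ht, h⟩

variable {X T J H : Type*} [MeasurableSpace X] [Fintype J]
  [NormedAddCommGroup H] [InnerProductSpace ℝ H] [MeasurableSpace H]

/-- The increments of the family `f` are dominated, at almost every point, by those of the linear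
functionals `⟪a t, Ψ j x⟫` of the parameter vector `a t`, for finitely many bounded feature maps
`Ψ j`. This is what bounds the Rademacher complexity of `f`. -/
structure HasLinearIncrements (μ : Measure X) (f : T → X → ℝ) (a : T → H) (Ψ : J → X → H)
    (L : ℝ≥0) (r : ℝ) : Prop where
  measurable (t : T) : Measurable (f t)
  measurable_feature (j : J) : Measurable (Ψ j)
  norm_feature_le : ∀ᵐ x ∂μ, ∀ j, ‖Ψ j x‖ ≤ r
  abs_sub_le : ∀ᵐ x ∂μ, ∀ t t', |f t x - f t' x| ≤ L * ∑ j, |inner ℝ (a t - a t') (Ψ j x)|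

namespace HasLinearIncrements

variable {μ : Measure X} {f : T → X → ℝ} {a : T → H} {Ψ : J → X → H}
  {L c : ℝ≥0} {r R : ℝ}

theorem comp {T' : Type*} (h : HasLinearIncrements μ f a Ψ L r) (g : T' → T) :
    HasLinearIncrements μ (fun t ↦ f (g t)) (fun t ↦ a (g t)) Ψ L r where
  measurable t := h.measurable (g t)
  measurable_feature := h.measurable_feature
  norm_feature_le := h.norm_feature_le
  abs_sub_le := h.abs_sub_le.mono fun _ hx t t' ↦ hx (g t) (g t')

theorem neg (h : HasLinearIncrements μ f a Ψ L r) :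
    HasLinearIncrements μ (fun t x ↦ -f t x) a Ψ L r where
  measurable t := (h.measurable t).neg
  measurable_feature := h.measurable_feature
  norm_feature_le := h.norm_feature_le
  abs_sub_le := h.abs_sub_le.mono fun x hx t t' ↦ by
    rw [neg_sub_neg, abs_sub_comm]
    exact hx t t'

theorem abs_sub_le_norm (h : HasLinearIncrements μ f a Ψ L r) :
    ∀ᵐ x ∂μ, ∀ t t', |f t x - f t' x| ≤ L * Fintype.card J * r * ‖a t - a t'‖ := by
  filter_upwards [h.abs_sub_le, h.norm_feature_le] with x hx hr t t'
  calc |f t x - f t' x| ≤ L * ∑ j, |inner ℝ (a t - a t') (Ψ j x)| := hx t t'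
    _ ≤ L * ∑ _j : J, ‖a t - a t'‖ * r := by
      gcongr with j
      exact (abs_real_inner_le_norm _ _).trans (by gcongr; exact hr j)
    _ = L * Fintype.card J * r * ‖a t - a t'‖ := by
      rw [Finset.sum_const, Finset.card_univ, nsmul_eq_mul]
      ring

variable [IsProbabilityMeasure μ]

theorem integrable (h : HasLinearIncrements μ f a Ψ L r) (hc : ∀ t x y, |f t x - f t y| ≤ c)
    (t : T) : Integrable (f t) μ := by
  obtain ⟨x₀⟩ := nonempty_of_isProbabilityMeasure μ
  refine .of_bound (h.measurable t).aestronglyMeasurable (|f t x₀| + c) (.of_forall fun x ↦ ?_)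
  rw [Real.norm_eq_abs]
  linarith [abs_sub_abs_le_abs_sub (f t x) (f t x₀), hc t x x₀]

theorem ae_continuous_sum_centered [PseudoMetricSpace T] (h : HasLinearIncrements μ f a Ψ L r)
    (hc : ∀ t x y, |f t x - f t y| ≤ c) (ha : Isometry a) {n : ℕ} :
    ∀ᵐ ω ∂Measure.pi fun _ : Fin n ↦ μ,
      Continuous fun t ↦ ∑ i, (f t (ω i) - ∫ x, f t x ∂μ) := by
  set K : ℝ≥0 := (L * Fintype.card J * r).toNNReal
  have hLip : ∀ᵐ x ∂μ, ∀ t t', |f t x - f t' x| ≤ K * dist t t' := by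
    filter_upwards [h.abs_sub_le_norm] with x hx t t'
    rw [← ha.dist_eq, dist_eq_norm]
    exact (hx t t').trans (mul_le_mul_of_nonneg_right (Real.le_coe_toNNReal _) (norm_nonneg _))
  have hmean : LipschitzWith K fun t ↦ ∫ x, f t x ∂μ := .of_dist_le_mul fun t t' ↦ by
    rw [Real.dist_eq, ← integral_sub (h.integrable hc t) (h.integrable hc t')]
    simpa using norm_integral_le_of_norm_le_const
      (hLip.mono fun x hx ↦ (Real.norm_eq_abs _).trans_le (hx t t'))
  have hsample : ∀ᵐ ω ∂Measure.pi fun _ : Fin n ↦ μ, ∀ i t t',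
      |f t (ω i) - f t' (ω i)| ≤ K * dist t t' :=
    ae_all_iff.2 fun i ↦ (Measure.tendsto_eval_ae_ae (μ := fun _ ↦ μ) (i := i)).eventually hLip
  filter_upwards [hsample] with ω hω
  exact continuous_finsetSum _ fun i _ ↦
    (LipschitzWith.of_dist_le_mul (hω i)).continuous.sub hmean.continuous

variable [MeasurableSpace J] [MeasurableSingletonClass J] [Nonempty J]
  [BorelSpace H] [SecondCountableTopology H]

theorem integral_iSup_centered_le [Finite T] [Nonempty T] (h : HasLinearIncrements μ f a Ψ L r)
    (hf : ∀ t, Integrable (f t) μ) (A : T → ℝ) :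
    ∫ x, ⨆ t, (A t + (f t x - ∫ y, f t y ∂μ)) ∂μ ≤
      ∫ p, ⨆ t, (A t + 2 * Fintype.card J * L * inner ℝ (a t) (signedFeature Ψ p))
        ∂signedLaw μ J := by
  have hint : Integrable
      (fun p ↦ ⨆ t, (A t + 2 * Fintype.card J * L * inner ℝ (a t) (signedFeature Ψ p)))
      (signedLaw μ J) := integrable_iSup fun t ↦ (integrable_const _).add
    ((integrable_inner_signedFeature h.measurable_feature h.norm_feature_le (a t)).const_mul _)
  have hpm : Integrable (fun x ↦ ((⨆ t, (A t + 2 * f t x)) + ⨆ t, (A t - 2 * f t x)) / 2) μ :=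
    ((integrable_iSup fun t ↦ (integrable_const _).add ((hf t).const_mul 2)).add
      (integrable_iSup fun t ↦ (integrable_const _).sub ((hf t).const_mul 2))).div_const 2
  rw [signedLaw, integral_prod _ hint]
  refine (integral_iSup_add_sub_integral_le hf A).trans
    (integral_mono_ae hpm hint.integral_prod_left ?_)
  filter_upwards [h.abs_sub_le] with x hx
  have hscaled : ∀ t t', |2 * f t x - 2 * f t' x| ≤
      ∑ j, |2 * L * inner ℝ (a t) (Ψ j x) - 2 * L * inner ℝ (a t') (Ψ j x)| := fun t t' ↦ by
    simp_rw [← mul_sub, ← inner_sub_left, abs_mul, abs_two, NNReal.abs_eq, mul_assoc,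
      ← Finset.mul_sum]
    exact mul_le_mul_of_nonneg_left (hx t t') zero_le_two
  have hcontraction := iSup_add_add_iSup_sub_le hscaled A
  rw [integral_uniform_prod_bool, ← Finset.sum_div, ← mul_div_assoc]
  refine div_le_div_of_nonneg_right ?_ zero_le_two
  refine hcontraction.trans_eq ?_
  simp only [signedFeature, cond_true, cond_false, one_smul, neg_smul, inner_neg_right, mul_neg,
    ← sub_eq_add_neg, mul_left_comm (Fintype.card J : ℝ), mul_assoc]

variable [CompleteSpace H]

theorem integral_iSup_sum_centered_le [Finite T] [Nonempty T]
    (h : HasLinearIncrements μ f a Ψ L r) (hf : ∀ t, Integrable (f t) μ) (hR : ∀ t, ‖a t‖ ≤ R)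
    (n : ℕ) :
    ∫ ω : Fin n → X, ⨆ t, ∑ i, (f t (ω i) - ∫ x, f t x ∂μ) ∂Measure.pi (fun _ ↦ μ) ≤
      2 * Fintype.card J * L * R * (r * √n) := by
  set C : ℝ := 2 * Fintype.card J * L
  have hR0 : 0 ≤ R := (norm_nonneg _).trans (hR (Classical.arbitrary T))
  have hq : ∀ t, Integrable (fun p ↦ C * inner ℝ (a t) (signedFeature Ψ p)) (signedLaw μ J) :=
    fun t ↦ (integrable_inner_signedFeature h.measurable_feature h.norm_feature_le _).const_mul C
  have hcompare := integral_iSup_add_sum_le (fun t ↦ (hf t).sub (integrable_const _)) hq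
    (fun A ↦ h.integral_iSup_centered_le hf A) n 0
  simp only [Pi.zero_apply, zero_add, Pi.sub_apply] at hcompare
  have hnorm : Integrable (fun η : Fin n → X × J × Bool ↦ ‖∑ i, signedFeature Ψ (η i)‖)
      (Measure.pi fun _ ↦ signedLaw μ J) := (integrable_pi_sum ((memLp_signedFeature
    h.measurable_feature h.norm_feature_le 1).integrable le_rfl)).norm
  calc _ ≤ _ := hcompare
    _ ≤ ∫ η : Fin n → X × J × Bool, C * R * ‖∑ i, signedFeature Ψ (η i)‖
          ∂Measure.pi (fun _ ↦ signedLaw μ J) := by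
      refine integral_mono (integrable_iSup fun t ↦ integrable_pi_sum (hq t))
        (hnorm.const_mul _) fun η ↦ ciSup_le fun t ↦ ?_
      have hC : 0 ≤ C := by positivity
      rw [← Finset.mul_sum, ← inner_sum]
      exact (mul_le_mul_of_nonneg_left ((real_inner_le_norm _ _).trans
        (mul_le_mul_of_nonneg_right (hR t) (norm_nonneg _))) hC).trans_eq (mul_assoc C R _).symm
    _ ≤ C * R * (r * √n) := by
      rw [integral_const_mul]
      gcongr
      exact integral_norm_sum_signedFeature_le h.measurable_feature h.norm_feature_le n

theorem measureReal_exists_lt_sum_centered_le_of_finite [Finite T]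
    (h : HasLinearIncrements μ f a Ψ L r) (hc : ∀ t x y, |f t x - f t y| ≤ c)
    (hR : ∀ t, ‖a t‖ ≤ R) {n : ℕ} {s : ℝ} (hs : 0 ≤ s) :
    (Measure.pi fun _ : Fin n ↦ μ).real {ω | ∃ t,
        2 * Fintype.card J * L * R * (r * √n) + s < ∑ i, (f t (ω i) - ∫ x, f t x ∂μ)} ≤
      Real.exp (-(2 * s ^ 2) / (n * c ^ 2)) := by
  rcases isEmpty_or_nonempty T with _ | _
  · simpa using (Real.exp_pos _).le
  set S : (Fin n → X) → ℝ := fun ω ↦ ⨆ t, ∑ i, (f t (ω i) - ∫ x, f t x ∂μ)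
  have hSm : Measurable S := .iSup fun t ↦ Finset.measurable_sum _ fun i _ ↦
    ((h.measurable t).comp (measurable_pi_apply i)).sub_const _
  have hSc : HasBoundedDifferences S fun _ ↦ c := fun ω i x ↦ abs_iSup_sub_iSup_le fun t ↦ by
    rw [← Finset.sum_sub_distrib, Finset.sum_eq_single i]
    · simpa using hc t x (ω i)
    · intro j _ hj
      simp [hj]
    · simp
  have hmean := h.integral_iSup_sum_centered_le (h.integrable hc) hR n
  refine (measureReal_mono ?_).trans
    ((hSc.measureReal_le_sub_integral_le hSm hs).trans_eq (by simp))
  rintro ω ⟨t, ht⟩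
  have hle : _ ≤ S ω := Finite.le_ciSup (fun t ↦ ∑ i, (f t (ω i) - ∫ x, f t x ∂μ)) t
  rw [Set.mem_ofPred_eq]
  linarith

theorem measure_exists_lt_sum_centered_le
    (h : HasLinearIncrements μ f a Ψ L r) (hc : ∀ t x y, |f t x - f t y| ≤ c)
    (hR : ∀ t, ‖a t‖ ≤ R) {n : ℕ} {s : ℝ} (hs : 0 ≤ s) :
    (Measure.pi fun _ : Fin n ↦ μ) {ω | ∃ t,
        2 * Fintype.card J * L * R * (r * √n) + s < ∑ i, (f t (ω i) - ∫ x, f t x ∂μ)} ≤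
      ENNReal.ofReal (Real.exp (-(2 * s ^ 2) / (n * c ^ 2))) := by
  let _ : PseudoMetricSpace T := .induced a inferInstance
  have : SecondCountableTopology T := TopologicalSpace.secondCountableTopology_induced T H a
  refine measure_exists_lt_le_of_forall_finset ?_ fun F ↦ ?_
  · exact h.ae_continuous_sum_centered hc (.of_dist_eq fun _ _ ↦ rfl)
  · have hF := (h.comp ((↑) : F → T)).measureReal_exists_lt_sum_centered_le_of_finite
      (fun t ↦ hc t) (fun t ↦ hR t) (n := n) hs
    rw [← ENNReal.ofReal_le_ofReal_iff (Real.exp_pos _).le, ofReal_measureReal] at hF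
    simpa only [Subtype.exists, exists_prop] using hF

theorem measure_exists_lt_abs_sum_centered_le
    (h : HasLinearIncrements μ f a Ψ L r) (hc : ∀ t x y, |f t x - f t y| ≤ c)
    (hR : ∀ t, ‖a t‖ ≤ R) {n : ℕ} {s : ℝ} (hs : 0 ≤ s) :
    (Measure.pi fun _ : Fin n ↦ μ) {ω | ∃ t,
        2 * Fintype.card J * L * R * (r * √n) + s < |∑ i, (f t (ω i) - ∫ x, f t x ∂μ)|} ≤
      2 * ENNReal.ofReal (Real.exp (-(2 * s ^ 2) / (n * c ^ 2))) := by
  have hneg : ∀ t x y, |-f t x - -f t y| ≤ c := fun t x y ↦ by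
    rw [neg_sub_neg]
    exact hc t y x
  rw [two_mul (ENNReal.ofReal _)]
  refine (measure_mono ?_).trans ((measure_union_le _ _).trans (add_le_add
    (h.measure_exists_lt_sum_centered_le hc hR hs)
    (h.neg.measure_exists_lt_sum_centered_le hneg hR hs)))
  rintro ω ⟨t, ht⟩
  rcases lt_abs.1 ht with ht | ht
  · exact Or.inl ⟨t, ht⟩
  · refine Or.inr ⟨t, ht.trans_eq ?_⟩
    rw [integral_neg, ← Finset.sum_neg_distrib]
    exact Finset.sum_congr rfl fun i _ ↦ by ring

end HasLinearIncrements

end UniformDeviation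

section Gibbs

variable {ι : Type*} [Fintype ι]

/-- The Gibbs distribution with reference weights `w` and scores `h`. -/
noncomputable def gibbs (w h : ι → ℝ) (k : ι) : ℝ :=
  w k * Real.exp (h k) / ∑ l, w l * Real.exp (h l)

theorem gibbs_smul {c : ℝ} (hc : c ≠ 0) (w h : ι → ℝ) : gibbs (c • w) h = gibbs w h := by
  ext k
  simp only [gibbs, Pi.smul_apply, smul_eq_mul, mul_assoc, ← Finset.mul_sum,
    mul_div_mul_left _ _ hc]

theorem gibbs_mem_Icc {w : ι → ℝ} (hw : 0 ≤ w) (h : ι → ℝ) (k : ι) :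
    gibbs w h k ∈ Set.Icc 0 1 := by
  have hterm : ∀ l ∈ Finset.univ, 0 ≤ w l * Real.exp (h l) :=
    fun l _ ↦ mul_nonneg (hw l) (Real.exp_pos _).le
  exact ⟨div_nonneg (hterm k (Finset.mem_univ k)) (Finset.sum_nonneg hterm),
    div_le_one_of_le₀ (Finset.single_le_sum hterm (Finset.mem_univ k)) (Finset.sum_nonneg hterm)⟩

theorem abs_exp_sub_exp_le {x y : ℝ} (hx : x ≤ 0) (hy : y ≤ 0) :
    |Real.exp x - Real.exp y| ≤ |x - y| := by
  simpa using (convex_Iic (0 : ℝ)).norm_image_sub_le_of_norm_deriv_le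
    (fun _ _ ↦ Real.differentiableAt_exp) (C := 1)
    (fun z hz ↦ by simpa [abs_of_pos (Real.exp_pos z)] using hz) hy hx

theorem abs_div_sub_div_le {p q D E : ℝ} (hq : 0 ≤ q) (hqE : q ≤ E) (hD : 0 < D) :
    |p / D - q / E| ≤ (|p - q| + |D - E|) / D := by
  have hratio : |q / E| ≤ 1 := by
    rw [abs_of_nonneg (div_nonneg hq (hq.trans hqE))]
    exact div_le_one_of_le₀ hqE (hq.trans hqE)
  have hsplit : p / D - q / E = ((p - q) - q / E * (D - E)) / D := by
    rcases (hq.trans hqE).eq_or_lt with rfl | hE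
    · simp [le_antisymm hqE hq]
    · field_simp
      ring
  rw [hsplit, abs_div, abs_of_pos hD]
  gcongr
  refine (abs_sub _ _).trans (add_le_add_right ?_ _)
  rw [abs_mul]
  exact mul_le_of_le_one_left (abs_nonneg _) hratio

theorem exp_neg_le_sum_mul_exp {w h : ι → ℝ} {B : ℝ} (hw : w ∈ stdSimplex ℝ ι)
    (hh : ∀ l, -B ≤ h l) : Real.exp (-B) ≤ ∑ l, w l * Real.exp (h l) :=
  calc Real.exp (-B) = ∑ l, w l * Real.exp (-B) := by rw [← Finset.sum_mul, hw.2, one_mul]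
    _ ≤ ∑ l, w l * Real.exp (h l) := by
      gcongr with l
      · exact hw.1 l
      · exact hh l

theorem abs_mul_exp_sub_mul_exp_le {v w x y : ℝ} (hw : w ∈ Set.Icc (0 : ℝ) 1) (hx : x ≤ 0)
    (hy : y ≤ 0) : |v * Real.exp x - w * Real.exp y| ≤ |v - w| + |x - y| :=
  calc |v * Real.exp x - w * Real.exp y|
      = |(v - w) * Real.exp x + w * (Real.exp x - Real.exp y)| := by ring_nf
    _ ≤ |(v - w) * Real.exp x| + |w * (Real.exp x - Real.exp y)| := abs_add_le _ _
    _ ≤ |v - w| + |x - y| := by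
      rw [abs_mul, abs_mul, abs_of_pos (Real.exp_pos x), abs_of_nonneg hw.1]
      exact add_le_add (mul_le_of_le_one_right (abs_nonneg _) (Real.exp_le_one_iff.2 hx))
        ((mul_le_of_le_one_left (abs_nonneg _) hw.2).trans (abs_exp_sub_exp_le hx hy))

theorem abs_gibbs_sub_gibbs_le {w w' h h' : ι → ℝ} {B : ℝ} (hw : w ∈ stdSimplex ℝ ι)
    (hw' : w' ∈ stdSimplex ℝ ι) (hh : ∀ l, h l ∈ Set.Icc (-B) 0)
    (hh' : ∀ l, h' l ≤ 0) (k : ι) :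
    |gibbs w h k - gibbs w' h' k| ≤ 2 * Real.exp B * ∑ l, (|w l - w' l| + |h l - h' l|) := by
  have hterm : ∀ l, |w l * Real.exp (h l) - w' l * Real.exp (h' l)| ≤
      |w l - w' l| + |h l - h' l| := fun l ↦
    abs_mul_exp_sub_mul_exp_le (mem_Icc_of_mem_stdSimplex hw' l) (hh l).2 (hh' l)
  have hnonneg : ∀ l ∈ Finset.univ, 0 ≤ w' l * Real.exp (h' l) :=
    fun l _ ↦ mul_nonneg (hw'.1 l) (Real.exp_pos _).le
  have hdenom := exp_neg_le_sum_mul_exp hw fun l ↦ (hh l).1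
  have hnum : |w k * Real.exp (h k) - w' k * Real.exp (h' k)| ≤
      ∑ l, (|w l - w' l| + |h l - h' l|) :=
    (hterm k).trans (Finset.single_le_sum (f := fun l ↦ |w l - w' l| + |h l - h' l|)
      (fun _ _ ↦ by positivity) (Finset.mem_univ k))
  have hsum : |(∑ l, w l * Real.exp (h l)) - ∑ l, w' l * Real.exp (h' l)| ≤
      ∑ l, (|w l - w' l| + |h l - h' l|) := by
    rw [← Finset.sum_sub_distrib]
    exact (Finset.abs_sum_le_sum_abs _ _).trans (Finset.sum_le_sum fun l _ ↦ hterm l)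
  refine (abs_div_sub_div_le (hnonneg k (Finset.mem_univ k))
    (Finset.single_le_sum hnonneg (Finset.mem_univ k))
    ((Real.exp_pos _).trans_le hdenom)).trans ?_
  calc _ ≤ (∑ l, (|w l - w' l| + |h l - h' l|) + ∑ l, (|w l - w' l| + |h l - h' l|)) /
        Real.exp (-B) := by gcongr
    _ = _ := by
      rw [Real.exp_neg, div_inv_eq_mul]
      ring

end Gibbs

section Covariance

open Matrix

variable {m : Type*} [DecidableEq m] {S : Matrix m m ℝ} {ζ : ℝ}

theorem posDef_of_posSemidef_sub_smul_one (hζ : 0 < ζ) (hS : (S - ζ • 1).PosSemidef) :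
    S.PosDef := by
  simpa using (PosDef.one.smul hζ).add_posSemidef hS

variable [Fintype m]

theorem sum_sum_mul_eq_inner_toEuclideanLin (M : Matrix m m ℝ) (v : EuclideanSpace ℝ m) :
    ∑ i, ∑ j, v i * M i j * v j = inner ℝ v (toEuclideanLin M v) := by
  simp only [PiLp.inner_apply, toLpLin_apply, mulVec, dotProduct, RCLike.inner_apply,
    conj_trivial, Finset.sum_mul]
  exact Finset.sum_congr rfl fun i _ ↦ Finset.sum_congr rfl fun j _ ↦ by ring

theorem mul_norm_sq_le_inner_toEuclideanLin (hS : (S - ζ • 1).PosSemidef)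
    (v : EuclideanSpace ℝ m) : ζ * ‖v‖ ^ 2 ≤ inner ℝ v (toEuclideanLin S v) := by
  have hpos := (isPositive_toEuclideanLin_iff.2 hS).re_inner_nonneg_right v
  simpa [inner_sub_right, inner_smul_right, toLpLin_apply] using hpos

theorem posSemidef_sub_smul_one (hS : S.IsHermitian)
    (h : ∀ v, ζ * ‖v‖ ^ 2 ≤ inner ℝ v (toEuclideanLin S v)) : (S - ζ • 1).PosSemidef := by
  refine isPositive_toEuclideanLin_iff.1 ⟨isSymmetric_toEuclideanLin_iff.2 ?_, fun v ↦ ?_⟩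
  · exact hS.sub (isHermitian_one.smul (.all ζ))
  · rw [real_inner_comm]
    simpa [inner_sub_right, inner_smul_right, toLpLin_apply] using h v

theorem toEuclideanLin_inv_apply_toEuclideanLin (hS : S.PosDef) (v : EuclideanSpace ℝ m) :
    toEuclideanLin S (toEuclideanLin S⁻¹ v) = v := by
  simp [toLpLin_apply, mulVec_mulVec, mul_nonsing_inv S hS.det_pos.ne'.isUnit]

theorem norm_toEuclideanLin_inv_le (hζ : 0 < ζ) (hS : (S - ζ • 1).PosSemidef)
    (v : EuclideanSpace ℝ m) : ‖toEuclideanLin S⁻¹ v‖ ≤ ‖v‖ / ζ := by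
  set u := toEuclideanLin S⁻¹ v
  have hu : toEuclideanLin S u = v :=
    toEuclideanLin_inv_apply_toEuclideanLin (posDef_of_posSemidef_sub_smul_one hζ hS) v
  have hcoercive : ζ * ‖u‖ * ‖u‖ ≤ ‖v‖ * ‖u‖ := by
    have := mul_norm_sq_le_inner_toEuclideanLin hS u
    rw [hu] at this
    linarith [real_inner_le_norm u v]
  rw [le_div_iff₀ hζ]
  rcases (norm_nonneg u).eq_or_lt with hu0 | hu0
  · simp [← hu0]
  · linarith [le_of_mul_le_mul_right hcoercive hu0]

theorem inner_toEuclideanLin_inv_mem_Icc (hζ : 0 < ζ) (hS : (S - ζ • 1).PosSemidef)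
    (v : EuclideanSpace ℝ m) : inner ℝ v (toEuclideanLin S⁻¹ v) ∈ Set.Icc 0 (‖v‖ ^ 2 / ζ) := by
  have hpos := (posDef_of_posSemidef_sub_smul_one hζ hS).inv.posSemidef
  refine ⟨(isPositive_toEuclideanLin_iff.2 hpos).re_inner_nonneg_right v, ?_⟩
  calc inner ℝ v (toEuclideanLin S⁻¹ v) ≤ ‖v‖ * (‖v‖ / ζ) :=
        (real_inner_le_norm _ _).trans
          (mul_le_mul_of_nonneg_left (norm_toEuclideanLin_inv_le hζ hS v) (norm_nonneg v))
    _ = ‖v‖ ^ 2 / ζ := by ring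

theorem sum_sum_sq_le_card_mul_sq {M : Matrix m m ℝ} {c : ℝ}
    (hM : ∀ v, ‖toEuclideanLin M v‖ ≤ c * ‖v‖) :
    ∑ i, ∑ j, M i j ^ 2 ≤ Fintype.card m * c ^ 2 := by
  have hcol : ∀ j, ∑ i, M i j ^ 2 ≤ c ^ 2 := fun j ↦ by
    have h := pow_le_pow_left₀ (norm_nonneg _) (hM (EuclideanSpace.single j 1)) 2
    simpa [EuclideanSpace.real_norm_sq_eq] using h
  rw [Finset.sum_comm]
  simpa using Finset.sum_le_sum fun j (_ : j ∈ Finset.univ) ↦ hcol j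

end Covariance

section QuadraticFeature

open Matrix

variable {m : Type*}

/-- The coefficient vector of the quadratic polynomial `x ↦ xᵀ A x + bᵀ x + c`, to be paired with
`quadraticFeature x`. -/
noncomputable def quadraticCoeff (A : Matrix m m ℝ) (b : EuclideanSpace ℝ m) (c : ℝ) :
    EuclideanSpace ℝ ((m × m) ⊕ (m ⊕ Unit)) :=
  WithLp.toLp 2 (Sum.elim (fun p ↦ A p.1 p.2) (Sum.elim b fun _ ↦ c))

/-- The vector of all monomials of degree at most two in the coordinates of `x`. -/
noncomputable def quadraticFeature (x : EuclideanSpace ℝ m) :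
    EuclideanSpace ℝ ((m × m) ⊕ (m ⊕ Unit)) :=
  quadraticCoeff (vecMulVec x x) x 1

theorem measurable_quadraticFeature : Measurable (quadraticFeature (m := m)) := by
  refine (WithLp.measurable_toLp 2 _).comp (measurable_pi_iff.2 ?_)
  rintro (p | i | _) <;> simp only [Sum.elim_inl, Sum.elim_inr, vecMulVec_apply] <;> fun_prop

variable [Fintype m]

theorem norm_sq_quadraticCoeff (A : Matrix m m ℝ) (b : EuclideanSpace ℝ m) (c : ℝ) :
    ‖quadraticCoeff A b c‖ ^ 2 = ∑ i, ∑ j, A i j ^ 2 + ‖b‖ ^ 2 + c ^ 2 := by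
  simp [EuclideanSpace.real_norm_sq_eq, quadraticCoeff, Fintype.sum_sum_type,
    Fintype.sum_prod_type, add_assoc]

theorem norm_quadraticFeature_le (x : EuclideanSpace ℝ m) :
    ‖quadraticFeature x‖ ≤ ‖x‖ ^ 2 + 1 := by
  have hquad : ∑ i, ∑ j, vecMulVec x x i j ^ 2 = ‖x‖ ^ 2 * ‖x‖ ^ 2 := by
    simp only [EuclideanSpace.real_norm_sq_eq, Finset.sum_mul_sum, vecMulVec_apply, mul_pow]
  refine le_of_sq_le_sq ?_ (by positivity)
  rw [quadraticFeature, norm_sq_quadraticCoeff, hquad]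
  nlinarith [sq_nonneg ‖x‖]

variable [DecidableEq m]

theorem inner_quadraticCoeff_quadraticFeature (A : Matrix m m ℝ) (b x : EuclideanSpace ℝ m)
    (c : ℝ) : inner ℝ (quadraticCoeff A b c) (quadraticFeature x) =
      inner ℝ x (toEuclideanLin A x) + inner ℝ b x + c := by
  rw [← sum_sum_mul_eq_inner_toEuclideanLin]
  simp [PiLp.inner_apply, quadraticCoeff, quadraticFeature, Fintype.sum_sum_type,
    Fintype.sum_prod_type, vecMulVec_apply, mul_comm, mul_assoc, add_assoc]

/-- The coefficient vector of the quadratic polynomial `x ↦ -(x - μ)ᵀ A (x - μ) / 2`, the exponent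
of a Gaussian density with mean `μ` and precision matrix `A`. -/
noncomputable def gaussExponentCoeff (A : Matrix m m ℝ) (μ : EuclideanSpace ℝ m) :
    EuclideanSpace ℝ ((m × m) ⊕ (m ⊕ Unit)) :=
  quadraticCoeff (-(1 / 2 : ℝ) • A) (toEuclideanLin A μ) (-inner ℝ μ (toEuclideanLin A μ) / 2)

theorem inner_gaussExponentCoeff_quadraticFeature {A : Matrix m m ℝ} (hA : A.IsHermitian)
    (μ x : EuclideanSpace ℝ m) :
    inner ℝ (gaussExponentCoeff A μ) (quadraticFeature x) =
      -inner ℝ (x - μ) (toEuclideanLin A (x - μ)) / 2 := by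
  have hsymm : inner ℝ (toEuclideanLin A μ) x = inner ℝ μ (toEuclideanLin A x) :=
    isSymmetric_toEuclideanLin_iff.2 hA μ x
  rw [gaussExponentCoeff, inner_quadraticCoeff_quadraticFeature, map_sub, inner_sub_left,
    inner_sub_right, inner_sub_right, ← hsymm, real_inner_comm x (toEuclideanLin A μ), map_smul,
    LinearMap.smul_apply, inner_smul_right]
  ring

theorem norm_gaussExponentCoeff_inv_le [Nonempty m] {S : Matrix m m ℝ} {ζ ν : ℝ} (hζ : 0 < ζ)
    (hS : (S - ζ • 1).PosSemidef) {μ : EuclideanSpace ℝ m} (hμ : ‖μ‖ ≤ ν) :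
    ‖gaussExponentCoeff S⁻¹ μ‖ ≤ √(Fintype.card m) * ((1 + ν ^ 2) / ζ) := by
  have hcard : (1 : ℝ) ≤ Fintype.card m := by exact_mod_cast Fintype.card_pos
  have hquad : ∑ i, ∑ j, S⁻¹ i j ^ 2 ≤ Fintype.card m * (1 / ζ) ^ 2 :=
    sum_sum_sq_le_card_mul_sq fun v ↦
      (norm_toEuclideanLin_inv_le hζ hS v).trans_eq (by ring)
  have hlin : ‖toEuclideanLin S⁻¹ μ‖ ^ 2 ≤ (ν / ζ) ^ 2 := by
    gcongr
    exact (norm_toEuclideanLin_inv_le hζ hS μ).trans (by gcongr)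
  have hconst : (inner ℝ μ (toEuclideanLin S⁻¹ μ)) ^ 2 ≤ (ν ^ 2 / ζ) ^ 2 := by
    obtain ⟨hnonneg, hle⟩ := inner_toEuclideanLin_inv_mem_Icc hζ hS μ
    exact pow_le_pow_left₀ hnonneg (hle.trans (by gcongr)) 2
  refine le_of_sq_le_sq ?_ (by positivity)
  calc ‖gaussExponentCoeff S⁻¹ μ‖ ^ 2
      = (∑ i, ∑ j, S⁻¹ i j ^ 2) / 4 + ‖toEuclideanLin S⁻¹ μ‖ ^ 2 +
          (inner ℝ μ (toEuclideanLin S⁻¹ μ)) ^ 2 / 4 := by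
        rw [gaussExponentCoeff, norm_sq_quadraticCoeff]
        simp only [Matrix.smul_apply, smul_eq_mul, mul_pow, ← Finset.mul_sum]
        ring
    _ ≤ Fintype.card m * ((1 / ζ) ^ 2 / 4 + (ν / ζ) ^ 2 + (ν ^ 2 / ζ) ^ 2 / 4) := by
        nlinarith [sq_nonneg (ν / ζ), sq_nonneg (ν ^ 2 / ζ)]
    _ ≤ Fintype.card m * ((1 + ν ^ 2) / ζ) ^ 2 := by
        gcongr
        have : ((1 + ν ^ 2) / ζ) ^ 2 =
            (1 / ζ) ^ 2 + 2 * (ν / ζ) ^ 2 + (ν ^ 2 / ζ) ^ 2 := by ring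
        nlinarith [sq_nonneg (ν / ζ), sq_nonneg (ν ^ 2 / ζ), sq_nonneg (1 / ζ)]
    _ = (√(Fintype.card m) * ((1 + ν ^ 2) / ζ)) ^ 2 := by
        rw [mul_pow, Real.sq_sqrt (Nat.cast_nonneg _)]

end QuadraticFeature

section Mixture

open Matrix

theorem inner_piLp_single_right {ι E : Type*} [Fintype ι] [DecidableEq ι] [NormedAddCommGroup E]
    [InnerProductSpace ℝ E] (v : PiLp 2 fun _ : ι ↦ E) (j : ι) (y : E) :
    inner ℝ v (PiLp.single 2 j y) = inner ℝ (v j) y := by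
  rw [PiLp.inner_apply, Finset.sum_eq_single j]
  · simp
  · intro l _ hl
    simp [hl]
  · simp

/-- The parameter `Θ = (π, (μ₁, Σ₁), …, (μ_K, Σ_K))` of a `K`-component Gaussian mixture
in `ℝ^d`. -/
structure MixtureParams (d K : ℕ) where
  weight : Fin K → ℝ
  mean : Fin K → EuclideanSpace ℝ (Fin d)
  cov : Fin K → Matrix (Fin d) (Fin d) ℝ

namespace MixtureParams

variable {d K : ℕ} {ξ ζ ν xmax : ℝ} {Θ Θ' : MixtureParams d K} {x : EuclideanSpace ℝ (Fin d)}

/-- Membership in a parameter set that contains `Φ_{ξ,ζ,ν}`: only the one-sided constraints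
`ξ ≤ π_k` and `ζ ≤ λ_min(Σ_k)` are imposed, the latter as `Σ_k - ζ I ⪰ 0`. -/
structure IsAdmissible (ξ ζ ν : ℝ) (Θ : MixtureParams d K) : Prop where
  le_weight (k : Fin K) : ξ ≤ Θ.weight k
  sum_weight : ∑ k, Θ.weight k = 1
  norm_mean_le (k : Fin K) : ‖Θ.mean k‖ ≤ ν
  cov_sub_posSemidef (k : Fin K) : (Θ.cov k - ζ • 1).PosSemidef

/-- The weights `π_l det(Σ_l)^{-1/2}`, normalised to sum to one. -/
noncomputable def normalizedWeight (Θ : MixtureParams d K) (l : Fin K) : ℝ :=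
  Θ.weight l * (Θ.cov l).det ^ (-(1 : ℝ) / 2) /
    ∑ m, Θ.weight m * (Θ.cov m).det ^ (-(1 : ℝ) / 2)

/-- The exponents `-(x - μ_l)ᵀ Σ_l⁻¹ (x - μ_l) / 2` of the component densities. -/
noncomputable def exponent (Θ : MixtureParams d K) (x : EuclideanSpace ℝ (Fin d))
    (l : Fin K) : ℝ :=
  -inner ℝ (x - Θ.mean l) (toEuclideanLin (Θ.cov l)⁻¹ (x - Θ.mean l)) / 2

/-- A linear parametrisation of the mixture: the block `(l, true)` represents the constant function
`normalizedWeight Θ l` and the block `(l, false)` the function `fun x ↦ exponent Θ x l`, both as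
coefficient vectors against `quadraticFeature`. -/
noncomputable def coeff (Θ : MixtureParams d K) :
    PiLp 2 fun _ : Fin K × Bool ↦ EuclideanSpace ℝ ((Fin d × Fin d) ⊕ (Fin d ⊕ Unit)) :=
  WithLp.toLp 2 fun
    | (l, true) => quadraticCoeff 0 0 (Θ.normalizedWeight l)
    | (l, false) => gaussExponentCoeff (Θ.cov l)⁻¹ (Θ.mean l)

theorem measurable_resp (Θ : MixtureParams d K) (k : Fin K) :
    Measurable (resp Θ.weight Θ.mean Θ.cov k) := by
  unfold resp gaussDensity
  fun_prop

theorem inner_coeff_true (Θ : MixtureParams d K) (l : Fin K) (x : EuclideanSpace ℝ (Fin d)) :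
    inner ℝ (Θ.coeff (l, true)) (quadraticFeature x) = Θ.normalizedWeight l := by
  simp [coeff, inner_quadraticCoeff_quadraticFeature]

namespace IsAdmissible

theorem card_mul_le (h : Θ.IsAdmissible ξ ζ ν) : K * ξ ≤ 1 :=
  calc K * ξ = ∑ _k : Fin K, ξ := by simp
    _ ≤ ∑ k, Θ.weight k := Finset.sum_le_sum fun k _ ↦ h.le_weight k
    _ = 1 := h.sum_weight

theorem posDef_cov (hζ : 0 < ζ) (h : Θ.IsAdmissible ξ ζ ν) (k : Fin K) : (Θ.cov k).PosDef :=
  posDef_of_posSemidef_sub_smul_one hζ (h.cov_sub_posSemidef k)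

theorem inner_coeff_false (hζ : 0 < ζ) (h : Θ.IsAdmissible ξ ζ ν) (l : Fin K)
    (x : EuclideanSpace ℝ (Fin d)) :
    inner ℝ (Θ.coeff (l, false)) (quadraticFeature x) = Θ.exponent x l :=
  inner_gaussExponentCoeff_quadraticFeature (h.posDef_cov hζ l).inv.isHermitian _ _

theorem weight_mul_det_rpow_pos (hξ : 0 < ξ) (hζ : 0 < ζ) (h : Θ.IsAdmissible ξ ζ ν) (k : Fin K) :
    0 < Θ.weight k * (Θ.cov k).det ^ (-(1 : ℝ) / 2) :=
  mul_pos (hξ.trans_le (h.le_weight k)) (Real.rpow_pos_of_pos (h.posDef_cov hζ k).det_pos _)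

theorem sum_weight_mul_det_rpow_pos (hξ : 0 < ξ) (hζ : 0 < ζ) (h : Θ.IsAdmissible ξ ζ ν) :
    0 < ∑ k, Θ.weight k * (Θ.cov k).det ^ (-(1 : ℝ) / 2) := by
  refine Finset.sum_pos (fun k _ ↦ h.weight_mul_det_rpow_pos hξ hζ k)
    (Finset.nonempty_of_sum_ne_zero (f := Θ.weight) ?_)
  rw [h.sum_weight]
  exact one_ne_zero

theorem normalizedWeight_mem_stdSimplex (hξ : 0 < ξ) (hζ : 0 < ζ) (h : Θ.IsAdmissible ξ ζ ν) :
    Θ.normalizedWeight ∈ stdSimplex ℝ (Fin K) := by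
  have hsum := h.sum_weight_mul_det_rpow_pos hξ hζ
  refine ⟨fun k ↦ div_nonneg (h.weight_mul_det_rpow_pos hξ hζ k).le hsum.le, ?_⟩
  simp only [normalizedWeight]
  rw [← Finset.sum_div, div_self hsum.ne']

theorem resp_eq_gibbs (hξ : 0 < ξ) (hζ : 0 < ζ) (h : Θ.IsAdmissible ξ ζ ν) (k : Fin K)
    (x : EuclideanSpace ℝ (Fin d)) :
    resp Θ.weight Θ.mean Θ.cov k x = gibbs Θ.normalizedWeight (Θ.exponent x) k := by
  have hsum := h.sum_weight_mul_det_rpow_pos hξ hζ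
  set Z := ∑ k, Θ.weight k * (Θ.cov k).det ^ (-(1 : ℝ) / 2) with hZ
  set c : ℝ := (2 * Real.pi) ^ (-(d : ℝ) / 2) with hc_def
  have hc : 0 < c := by positivity
  have hterm : ∀ l, Θ.weight l * gaussDensity x (Θ.mean l) (Θ.cov l) =
      ((c * Z) • Θ.normalizedWeight) l * Real.exp (Θ.exponent x l) := fun l ↦ by
    rw [gaussDensity, sum_sum_mul_eq_inner_toEuclideanLin, exponent, Pi.smul_apply, smul_eq_mul,
      normalizedWeight, ← hZ, ← hc_def]
    field_simp
  rw [← gibbs_smul (mul_pos hc hsum).ne']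
  simp only [resp, gibbs, hterm]

theorem resp_mem_Icc (hξ : 0 < ξ) (hζ : 0 < ζ) (h : Θ.IsAdmissible ξ ζ ν) (k : Fin K)
    (x : EuclideanSpace ℝ (Fin d)) : resp Θ.weight Θ.mean Θ.cov k x ∈ Set.Icc 0 1 := by
  rw [h.resp_eq_gibbs hξ hζ]
  exact gibbs_mem_Icc (h.normalizedWeight_mem_stdSimplex hξ hζ).1 _ k

theorem exponent_mem_Icc (hζ : 0 < ζ) (h : Θ.IsAdmissible ξ ζ ν) (hx : ‖x‖ ≤ xmax) (l : Fin K) :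
    Θ.exponent x l ∈ Set.Icc (-((xmax + ν) ^ 2 / ζ / 2)) 0 := by
  obtain ⟨hnonneg, hle⟩ :=
    inner_toEuclideanLin_inv_mem_Icc hζ (h.cov_sub_posSemidef l) (x - Θ.mean l)
  have hdist : ‖x - Θ.mean l‖ ^ 2 / ζ ≤ (xmax + ν) ^ 2 / ζ := by
    gcongr
    exact (norm_sub_le _ _).trans (add_le_add hx (h.norm_mean_le l))
  constructor <;> rw [exponent] <;> linarith

theorem abs_resp_sub_resp_le (hξ : 0 < ξ) (hζ : 0 < ζ) (h : Θ.IsAdmissible ξ ζ ν)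
    (h' : Θ'.IsAdmissible ξ ζ ν) (hx : ‖x‖ ≤ xmax) (k : Fin K) :
    |resp Θ.weight Θ.mean Θ.cov k x - resp Θ'.weight Θ'.mean Θ'.cov k x| ≤
      2 * Real.exp ((xmax + ν) ^ 2 / ζ / 2) *
        ∑ j, |inner ℝ (Θ.coeff - Θ'.coeff) (PiLp.single 2 j (quadraticFeature x))| := by
  rw [h.resp_eq_gibbs hξ hζ, h'.resp_eq_gibbs hξ hζ]
  refine (abs_gibbs_sub_gibbs_le (h.normalizedWeight_mem_stdSimplex hξ hζ)
    (h'.normalizedWeight_mem_stdSimplex hξ hζ) (h.exponent_mem_Icc hζ hx)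
    (fun l ↦ (h'.exponent_mem_Icc hζ hx l).2) k).trans_eq ?_
  simp only [inner_piLp_single_right, Fintype.sum_prod_type, Fintype.sum_bool,
    inner_sub_left, inner_coeff_true, h.inner_coeff_false hζ, h'.inner_coeff_false hζ]

end IsAdmissible

theorem IsAdmissible.norm_coeff_le [NeZero d] (hξ : 0 < ξ) (hζ : 0 < ζ)
    (h : Θ.IsAdmissible ξ ζ ν) : ‖Θ.coeff‖ ≤ √(K * d) * (1 + (1 + ν ^ 2) / ζ) := by
  set q := (1 + ν ^ 2) / ζ
  have hq : 0 ≤ q := by positivity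
  have hd : (1 : ℝ) ≤ d := mod_cast Nat.one_le_iff_ne_zero.2 (NeZero.ne d)
  have hweight : ∀ l, ‖Θ.coeff (l, true)‖ ^ 2 ≤ 1 := fun l ↦ by
    obtain ⟨hnonneg, hle⟩ := mem_Icc_of_mem_stdSimplex
      (h.normalizedWeight_mem_stdSimplex hξ hζ) l
    simpa [coeff, norm_sq_quadraticCoeff] using (abs_of_nonneg hnonneg).trans_le hle
  have hexponent : ∀ l, ‖Θ.coeff (l, false)‖ ^ 2 ≤ d * q ^ 2 := fun l ↦ by
    have hle := norm_gaussExponentCoeff_inv_le hζ (h.cov_sub_posSemidef l) (h.norm_mean_le l)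
    rw [Fintype.card_fin] at hle
    refine (pow_le_pow_left₀ (norm_nonneg _) hle 2).trans_eq ?_
    rw [mul_pow, Real.sq_sqrt (Nat.cast_nonneg d)]
  refine le_of_sq_le_sq ?_ (by positivity)
  calc ‖Θ.coeff‖ ^ 2
      = ∑ l, (‖Θ.coeff (l, true)‖ ^ 2 + ‖Θ.coeff (l, false)‖ ^ 2) := by
        simp only [PiLp.norm_sq_eq_of_L2, Fintype.sum_prod_type, Fintype.sum_bool]
    _ ≤ ∑ _l : Fin K, (1 + d * q ^ 2) :=
        Finset.sum_le_sum fun l _ ↦ add_le_add (hweight l) (hexponent l)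
    _ = K * (1 + d * q ^ 2) := by simp only [Finset.sum_const, Finset.card_univ, Fintype.card_fin,
          nsmul_eq_mul]
    _ ≤ K * (d * (1 + q) ^ 2) := by
        gcongr
        nlinarith [mul_nonneg (Nat.cast_nonneg (α := ℝ) d) hq]
    _ = (√(K * d) * (1 + q)) ^ 2 := by
        rw [mul_pow, Real.sq_sqrt (by positivity), mul_assoc]

theorem hasLinearIncrements_resp (hξ : 0 < ξ) (hζ : 0 < ζ)
    {P : Measure (EuclideanSpace ℝ (Fin d))} (hP : ∀ᵐ x ∂P, ‖x‖ ≤ xmax) (k : Fin K) :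
    HasLinearIncrements P
      (fun Θ : {Θ : MixtureParams d K // Θ.IsAdmissible ξ ζ ν} ↦
        resp Θ.1.weight Θ.1.mean Θ.1.cov k)
      (fun Θ ↦ Θ.1.coeff) (fun j x ↦ PiLp.single 2 j (quadraticFeature x))
      (2 * Real.exp ((xmax + ν) ^ 2 / ζ / 2)).toNNReal (xmax ^ 2 + 1) where
  measurable Θ := measurable_resp Θ.1 k
  measurable_feature j := (WithLp.measurable_toLp 2 _).comp
    ((measurable_update 0).comp measurable_quadraticFeature)
  norm_feature_le := by
    filter_upwards [hP] with x hx j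
    rw [PiLp.norm_single]
    exact (norm_quadraticFeature_le x).trans (by gcongr)
  abs_sub_le := by
    filter_upwards [hP] with x hx Θ Θ'
    rw [Real.coe_toNNReal _ (by positivity)]
    exact Θ.2.abs_resp_sub_resp_le hξ hζ Θ'.2 hx k

/-- The constant `C(ξ, ζ, ν, xmax)` of the deviation bound. In order of appearance, its factors
bound the number `2 * K` of feature maps, the Lipschitz constant and the norms of the coefficient
vectors (up to `√d`) and of the feature vectors. -/
noncomputable def deviationConst (ξ ζ ν xmax : ℝ) : ℝ :=
  2 / ξ * (2 * Real.exp ((xmax + ν) ^ 2 / ζ / 2)) * (√(1 / ξ) * (1 + (1 + ν ^ 2) / ζ)) *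
    (xmax ^ 2 + 1)

theorem deviationConst_pos (hξ : 0 < ξ) (hζ : 0 < ζ) : 0 < deviationConst ξ ζ ν xmax := by
  unfold deviationConst
  positivity

theorem complexity_le_deviationConst (hξ : 0 < ξ) (hζ : 0 < ζ) (hK : K * ξ ≤ 1) (n : ℕ) :
    2 * Fintype.card (Fin K × Bool) * (2 * Real.exp ((xmax + ν) ^ 2 / ζ / 2)) *
        (√(K * d) * (1 + (1 + ν ^ 2) / ζ)) * ((xmax ^ 2 + 1) * √n) ≤
      n * (2 * deviationConst ξ ζ ν xmax * √(d / n)) := by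
  have hK' : (K : ℝ) ≤ 1 / ξ := (le_div_iff₀ hξ).2 hK
  have hsqrt : n * √(d / n) = √d * √n := by
    rw [Real.sqrt_div (Nat.cast_nonneg d)]
    rw [mul_div_left_comm, Real.div_sqrt]
  calc _ = 2 * (2 * K * (2 * Real.exp ((xmax + ν) ^ 2 / ζ / 2)) *
          (√K * (1 + (1 + ν ^ 2) / ζ)) * (xmax ^ 2 + 1)) * (√d * √n) := by
        rw [Real.sqrt_mul (Nat.cast_nonneg K)]
        simp only [Fintype.card_prod, Fintype.card_fin, Fintype.card_bool, Nat.cast_mul,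
          Nat.cast_ofNat]
        ring
    _ ≤ 2 * (2 * (1 / ξ) * (2 * Real.exp ((xmax + ν) ^ 2 / ζ / 2)) *
          (√(1 / ξ) * (1 + (1 + ν ^ 2) / ζ)) * (xmax ^ 2 + 1)) * (√d * √n) := by
        gcongr
    _ = n * (2 * deviationConst ξ ζ ν xmax * √(d / n)) := by
        rw [← hsqrt, deviationConst]
        ring

/-- The excess of the empirical over the expected responsibility. -/
noncomputable def respDeviation (Θ : MixtureParams d K) (k : Fin K)
    (P : Measure (EuclideanSpace ℝ (Fin d))) {n : ℕ} (ω : Fin n → EuclideanSpace ℝ (Fin d)) : ℝ :=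
  (∑ i, resp Θ.weight Θ.mean Θ.cov k (ω i)) / n - ∫ x, resp Θ.weight Θ.mean Θ.cov k x ∂P

theorem sum_resp_sub_integral (Θ : MixtureParams d K) (k : Fin K)
    (P : Measure (EuclideanSpace ℝ (Fin d))) {n : ℕ} (hn : n ≠ 0)
    (ω : Fin n → EuclideanSpace ℝ (Fin d)) :
    ∑ i, (resp Θ.weight Θ.mean Θ.cov k (ω i) - ∫ x, resp Θ.weight Θ.mean Θ.cov k x ∂P) =
      n * respDeviation Θ k P ω := by
  rw [respDeviation, mul_sub, mul_div_cancel₀ _ (Nat.cast_ne_zero.2 hn), Finset.sum_sub_distrib,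
    Finset.sum_const, Finset.card_univ, Fintype.card_fin, nsmul_eq_mul]

theorem respDeviation_of_dim_eq_zero (Θ : MixtureParams 0 K) (k : Fin K)
    (P : Measure (EuclideanSpace ℝ (Fin 0))) [IsProbabilityMeasure P] {n : ℕ} (hn : n ≠ 0)
    (ω : Fin n → EuclideanSpace ℝ (Fin 0)) : respDeviation Θ k P ω = 0 := by
  have hconst : ∀ x, resp Θ.weight Θ.mean Θ.cov k x = resp Θ.weight Θ.mean Θ.cov k 0 := fun x ↦ by
    rw [Subsingleton.elim x 0]
  have hn0 : (n : ℝ) ≠ 0 := mod_cast hn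
  simp [respDeviation, hconst, hn0]

variable {P : Measure (EuclideanSpace ℝ (Fin d))} [IsProbabilityMeasure P]

theorem measure_exists_lt_abs_respDeviation_le (hξ : 0 < ξ) (hζ : 0 < ζ)
    (hP : ∀ᵐ x ∂P, ‖x‖ ≤ xmax) (k : Fin K) {n : ℕ} (hn : n ≠ 0) {ε : ℝ} (hε : 0 ≤ ε) :
    (Measure.pi fun _ : Fin n ↦ P) {ω | ∃ Θ : MixtureParams d K, Θ.IsAdmissible ξ ζ ν ∧
        2 * deviationConst ξ ζ ν xmax * √(d / n) + ε < |respDeviation Θ k P ω|} ≤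
      2 * ENNReal.ofReal (Real.exp (-(2 * n * ε ^ 2))) := by
  have hn0 : (0 : ℝ) < n := mod_cast hn.pos
  rcases eq_zero_or_neZero d with rfl | hd
  · simp [respDeviation_of_dim_eq_zero _ _ _ hn, hε.not_gt]
  have : Nonempty (Fin K) := ⟨k⟩
  have hbounded : ∀ (Θ : {Θ : MixtureParams d K // Θ.IsAdmissible ξ ζ ν}) (x y),
      |resp Θ.1.weight Θ.1.mean Θ.1.cov k x - resp Θ.1.weight Θ.1.mean Θ.1.cov k y| ≤ (1 : ℝ≥0) :=
    fun Θ x y ↦ (abs_sub_le_of_le_of_le (Θ.2.resp_mem_Icc hξ hζ k x).1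
      (Θ.2.resp_mem_Icc hξ hζ k x).2 (Θ.2.resp_mem_Icc hξ hζ k y).1
      (Θ.2.resp_mem_Icc hξ hζ k y).2).trans_eq (by simp)
  have htail := (hasLinearIncrements_resp hξ hζ hP k).measure_exists_lt_abs_sum_centered_le
    hbounded (fun Θ ↦ Θ.2.norm_coeff_le hξ hζ) (n := n) (mul_nonneg hn0.le hε)
  refine (measure_mono ?_).trans (htail.trans_eq ?_)
  · rintro ω ⟨Θ, hΘ, hlt⟩
    refine ⟨⟨Θ, hΘ⟩, ?_⟩
    rw [sum_resp_sub_integral _ _ _ hn, abs_mul, Nat.abs_cast,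
      Real.coe_toNNReal _ (by positivity)]
    have hle := complexity_le_deviationConst (d := d) (ν := ν) (xmax := xmax) hξ hζ
      hΘ.card_mul_le n
    nlinarith [mul_lt_mul_of_pos_left hlt hn0]
  · congr 4
    simp only [NNReal.coe_one]
    field_simp

end MixtureParams

end Mixture

section UniformOfFinset

variable {X : Type*} [MeasurableSpace X] [MeasurableSingletonClass X] {s : Finset X}

theorem ae_mem_uniformOfFinset (hs : s.Nonempty) :
    ∀ᵐ x ∂(PMF.uniformOfFinset s hs).toMeasure, x ∈ s := by
  have hrestrict := (PMF.uniformOfFinset s hs).restrict_toMeasure_support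
  rw [PMF.support_uniformOfFinset] at hrestrict
  rw [← hrestrict]
  exact ae_restrict_mem s.measurableSet

theorem integral_uniformOfFinset (hs : s.Nonempty) (f : X → ℝ) :
    ∫ x, f x ∂(PMF.uniformOfFinset s hs).toMeasure = (∑ x ∈ s, f x) / s.card := by
  have hrestrict := (PMF.uniformOfFinset s hs).restrict_toMeasure_support
  rw [PMF.support_uniformOfFinset] at hrestrict
  rw [← hrestrict, setIntegral_finset s .finset, Finset.sum_div]
  refine Finset.sum_congr rfl fun x hx ↦ ?_
  rw [measureReal_def, PMF.toMeasure_apply_singleton _ _ (measurableSet_singleton x),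
    PMF.uniformOfFinset_apply_of_mem hs hx, ENNReal.toReal_inv, ENNReal.toReal_natCast, smul_eq_mul,
    inv_mul_eq_div]

end UniformOfFinset

theorem inPhi.isAdmissible {d K : ℕ} {ξ ζ ν : ℝ} {π : Fin K → ℝ}
    {μ : Fin K → EuclideanSpace ℝ (Fin d)} {S : Fin K → Matrix (Fin d) (Fin d) ℝ}
    (h : inPhi ξ ζ ν π μ S) : (⟨π, μ, S⟩ : MixtureParams d K).IsAdmissible ξ ζ ν := by
  obtain ⟨-, hsum, hweight, hmean, hcov⟩ := h
  refine ⟨fun k ↦ (hweight k).1.le, hsum, hmean, fun k ↦ ?_⟩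
  refine posSemidef_sub_smul_one (hcov k).1 fun v ↦ ?_
  rw [← sum_sum_mul_eq_inner_toEuclideanLin]
  rcases eq_or_ne v 0 with rfl | hv
  · simp
  · exact ((hcov k).2 v hv).1.le

theorem two_mul_exp_neg_le {δ : ℝ} (hδ : 0 < δ) (hδ1 : δ < 1) {n : ℕ} (hn : n ≠ 0) :
    2 * Real.exp (-(2 * n * (4 * √(2 * Real.log (4 / δ) / n)) ^ 2)) ≤ δ := by
  have hlog : 0 < Real.log (4 / δ) := Real.log_pos (by rw [lt_div_iff₀ hδ]; linarith)
  have hexponent : 2 * n * (4 * √(2 * Real.log (4 / δ) / n)) ^ 2 = 64 * Real.log (4 / δ) := by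
    rw [mul_pow, Real.sq_sqrt (by positivity)]
    field_simp
    norm_num
  calc 2 * Real.exp (-(2 * n * (4 * √(2 * Real.log (4 / δ) / n)) ^ 2))
      ≤ 2 * Real.exp (-Real.log (4 / δ)) := by
        rw [hexponent]
        gcongr
        linarith
    _ = δ / 2 := by
        rw [Real.exp_neg, Real.exp_log (by positivity), inv_div]
        ring
    _ ≤ δ := half_le_self hδ.le

theorem ofReal_one_sub_le_measure {Ω : Type*} [MeasurableSpace Ω] {P : Measure Ω}
    [IsProbabilityMeasure P] {s : Set Ω} {δ : ℝ} (hδ : 0 ≤ δ) (hs : P sᶜ ≤ ENNReal.ofReal δ) :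
    ENNReal.ofReal (1 - δ) ≤ P s := by
  rw [ENNReal.ofReal_sub _ hδ, ENNReal.ofReal_one, tsub_le_iff_right, ← measure_univ (μ := P)]
  exact (measure_univ_le_add_compl s).trans (add_le_add_right hs _)

theorem responsibility_uniform_deviation_general {ξ ζ : ℝ} (ν xmax : ℝ) (hξ : 0 < ξ) (hζ : 0 < ζ) :
    ∃ C : ℝ, 0 < C ∧
      ∀ (d K : ℕ) (k : Fin K) (P : Measure (EuclideanSpace ℝ (Fin d))) [IsProbabilityMeasure P],
        (∀ᵐ x ∂P, ‖x‖ ≤ xmax) →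
      ∀ n : ℕ, n ≠ 0 →
      ∀ δ : ℝ, 0 < δ → δ < 1 →
        ENNReal.ofReal (1 - δ) ≤ (Measure.pi fun _ : Fin n ↦ P)
          {ω | ∀ Θ : MixtureParams d K, Θ.IsAdmissible ξ ζ ν →
            |Θ.respDeviation k P ω| ≤ 2 * C * √(d / n) + 4 * √(2 * Real.log (4 / δ) / n)} := by
  refine ⟨MixtureParams.deviationConst ξ ζ ν xmax, MixtureParams.deviationConst_pos hξ hζ,
    fun d K k P _ hP n hn δ hδ hδ1 ↦ ?_⟩
  have htail := MixtureParams.measure_exists_lt_abs_respDeviation_le (ν := ν) hξ hζ hP k hn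
    (ε := 4 * √(2 * Real.log (4 / δ) / n)) (by positivity)
  have hbad : 2 * ENNReal.ofReal (Real.exp (-(2 * n * (4 * √(2 * Real.log (4 / δ) / n)) ^ 2))) ≤
      ENNReal.ofReal δ := by
    rw [← ENNReal.ofReal_ofNat, ← ENNReal.ofReal_mul zero_le_two]
    exact ENNReal.ofReal_le_ofReal (two_mul_exp_neg_le hδ hδ1 hn)
  refine ofReal_one_sub_le_measure hδ.le ((measure_mono fun ω hω ↦ ?_).trans (htail.trans hbad))
  simpa using hω

/-- **Uniform deviation of empirical responsibilities.**  For i.i.d. uniform draws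
`X₁,…,X_{n₁}` (with replacement) from a finite set `D¹` of norm-bounded points and a fixed
component `k`, there is a constant `C = C(ξ,ζ,ν,x_max) > 0` such that with probability at
least `1 - δ`,
`sup_{Θ∈Φ} |(1/n₁)Σᵢ ψ_k(Xᵢ;Θ) - (1/|D¹|)Σ_{x∈D¹} ψ_k(x;Θ)| ≤ 2C√(d/n₁) + 4√(2 log(4/δ)/n₁)`. -/
theorem responsibility_uniform_deviation
    (ξ ζ ν xmax : ℝ) (hξ : 0 < ξ) (hζ : 0 < ζ) (hν : 0 < ν) (hxmax : 0 < xmax) :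
    ∃ C : ℝ, 0 < C ∧
      ∀ (d K : ℕ), 0 < K → ∀ k : Fin K,
      ∀ (D1 : Finset (EuclideanSpace ℝ (Fin d))) (h1 : D1.Nonempty),
        (∀ x ∈ D1, ‖x‖ ≤ xmax) →
      ∀ n1 : ℕ, 1 ≤ n1 →
      ∀ δ : ℝ, 0 < δ → δ < 1 →
        (Measure.pi fun _ : Fin n1 => (PMF.uniformOfFinset D1 h1).toMeasure)
          {ω : Fin n1 → EuclideanSpace ℝ (Fin d) |
            ∀ (π : Fin K → ℝ) (μ : Fin K → EuclideanSpace ℝ (Fin d))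
              (S : Fin K → Matrix (Fin d) (Fin d) ℝ), inPhi ξ ζ ν π μ S →
              |(∑ i, resp π μ S k (ω i)) / (n1 : ℝ) -
                  (∑ x ∈ D1, resp π μ S k x) / (D1.card : ℝ)| ≤
                2 * C * Real.sqrt ((d : ℝ) / n1) +
                  4 * Real.sqrt (2 * Real.log (4 / δ) / n1)} ≥
          ENNReal.ofReal (1 - δ) := by
  obtain ⟨C, hC, hdeviation⟩ := responsibility_uniform_deviation_general ν xmax hξ hζ
  refine ⟨C, hC, fun d K _ k D1 h1 hD1 n1 hn1 δ hδ hδ1 ↦ ?_⟩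
  refine (hdeviation d K k _ ((ae_mem_uniformOfFinset h1).mono hD1) n1
    (Nat.one_le_iff_ne_zero.1 hn1) δ hδ hδ1).trans (measure_mono fun ω hω π μ S hΦ ↦ ?_)
  rw [← integral_uniformOfFinset h1]
  exact hω ⟨π, μ, S⟩ hΦ.isAdmissible
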